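/- arXiv:math/0608080 — 7 statements merged into one kernel-verified Lean document; each statement's English description precedes it below -/
import Mathlib

section
/- For every natural number i with i ≥ 1, the Johnson-type matrices satisfy the three-term recursion J_1 * J_i = (m−i+1)(N−m−i+1) · J_{i−1} + i·(N−2i) · J_i + (i+1)^2 · J_{i+1}, as an identity of Ω × Ω matrices over the integers (where N−2i is taken as an integer, possibly negative). -/
/-!
For `m`-element sets, `|S ∩ T| = m - i` says that `S` and `T` are at distance `|S \ T| = i` in the
Johnson graph. The `(S, T)` entry of `J_1 * J_i` therefore counts the neighbours `U` of `S` at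
distance `i` from `T`. These neighbours are the exchanges `(S \ {x}) ∪ {y}` with `x ∈ S` and
`y ∉ S`, each arising from a unique pair `(x, y)`, and an exchange changes the distance
`b = |S \ T|` by `[y ∉ T] - [x ∉ T]`. Since `S` and `T` cut the ground set into regions of sizes
`m - b` (both), `b` (only `S`), `b` (only `T`) and `N - m - b` (neither), there are
`(m - b)(N - m - b)` exchanges increasing the distance, `b(N - 2b)` preserving it and `b²`
decreasing it. The recursion takes `b = i - 1`, `b = i` and `b = i + 1` in these three counts.
-/

open Finset

/-- `Omega N m` is the type of `m`-element subsets of `Fin N`. -/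
abbrev Omega (N m : ℕ) := {S : Finset (Fin N) // S.card = m}

/-- `J N m i` is the Ω × Ω integer matrix whose `(S, T)` entry is `1` if
`|S ∩ T| = m − i` (i.e. `|S ∩ T| + i = m`) and `0` otherwise.  It encodes
the perturbed `i`-deck operation: remove `i` elements and add `i` elements
not originally present. -/
def J (N m i : ℕ) : Matrix (Omega N m) (Omega N m) ℤ := fun S T =>
  if ((S : Finset (Fin N)) ∩ (T : Finset (Fin N))).card + i = m then 1 else 0

section Exchange

variable {α : Type*} [DecidableEq α] {S T U : Finset α} {x y : α}

lemma sdiff_eq_singleton_and_sdiff_eq_singleton_iff :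
    S \ U = {x} ∧ U \ S = {y} ↔ (x ∈ S ∧ y ∉ S) ∧ insert y (S.erase x) = U := by
  constructor
  · rintro ⟨hx, hy⟩
    simp only [Finset.ext_iff, mem_sdiff, mem_singleton] at hx hy
    grind
  · rintro ⟨⟨hx, hy⟩, rfl⟩
    grind

lemma exists_insert_erase_eq_iff :
    (∃ x y, (x ∈ S ∧ y ∉ S) ∧ insert y (S.erase x) = U) ↔ #U = #S ∧ #(S \ U) = 1 := by
  simp only [← sdiff_eq_singleton_and_sdiff_eq_singleton_iff, exists_and_left, exists_and_right,
    ← card_eq_one]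
  have hS := card_sdiff_add_card_inter S U
  have hU := card_sdiff_add_card_inter U S
  rw [inter_comm] at hU
  omega

lemma injOn_insert_erase :
    Set.InjOn (fun p : α × α => insert p.2 (S.erase p.1)) {p | p.1 ∈ S ∧ p.2 ∉ S} := by
  rintro ⟨x, y⟩ hp ⟨x', y'⟩ hq heq
  obtain ⟨hx, hy⟩ := sdiff_eq_singleton_and_sdiff_eq_singleton_iff.2 ⟨hp, heq⟩
  obtain ⟨hx', hy'⟩ := sdiff_eq_singleton_and_sdiff_eq_singleton_iff.2 ⟨hq, rfl⟩
  exact Prod.ext (singleton_injective (hx.symm.trans hx')) (singleton_injective (hy.symm.trans hy'))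

lemma card_insert_erase_sdiff (hx : x ∈ S) (hy : y ∉ S) :
    #(insert y (S.erase x) \ T) + (if x ∈ T then 0 else 1)
      = #(S \ T) + (if y ∈ T then 0 else 1) := by
  have herase : #(S.erase x \ T) + (if x ∈ T then 0 else 1) = #(S \ T) := by
    rw [erase_sdiff_comm]
    split_ifs with h
    · rw [erase_eq_of_notMem (by simp [h]), add_zero]
    · exact card_erase_add_one (mem_sdiff.2 ⟨hx, h⟩)
  by_cases h : y ∈ T
  · rw [insert_sdiff_of_mem _ h, if_pos h, herase, add_zero]
  · rw [insert_sdiff_of_notMem _ h, card_insert_of_notMem (by simp [hy]), if_neg h, ← herase,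
      add_right_comm]

variable [Fintype α] {M : Type*} [AddCommMonoid M]

lemma sum_card_sdiff_eq_one (S : Finset α) (f : Finset α → M) :
    ∑ U with #U = #S ∧ #(S \ U) = 1, f U = ∑ x ∈ S, ∑ y ∈ Sᶜ, f (insert y (S.erase x)) := by
  have himage : ({U | #U = #S ∧ #(S \ U) = 1} : Finset (Finset α))
      = (S ×ˢ Sᶜ).image fun p => insert p.2 (S.erase p.1) := by
    ext U
    simp only [mem_filter_univ, ← exists_insert_erase_eq_iff, mem_image, mem_product, mem_compl,
      Prod.exists]
  rw [himage, sum_image (by simpa [Set.InjOn] using injOn_insert_erase (S := S)), sum_product]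

/-- The truncated `#(S \ T) - 1` is harmless: its multiplicity vanishes when `S \ T` is empty. -/
lemma sum_card_insert_erase_sdiff (S T : Finset α) (f : ℕ → M) :
    ∑ x ∈ S, ∑ y ∈ Sᶜ, f #(insert y (S.erase x) \ T)
      = (#(S ∩ T) * #(S ∪ T)ᶜ) • f (#(S \ T) + 1)
        + (#(S ∩ T) * #(T \ S) + #(S \ T) * #(S ∪ T)ᶜ) • f #(S \ T)
        + (#(S \ T) * #(T \ S)) • f (#(S \ T) - 1) := by
  have hvalue : ∀ x ∈ S, ∀ y ∈ Sᶜ, f #(insert y (S.erase x) \ T)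
      = if x ∈ T then (if y ∈ T then f #(S \ T) else f (#(S \ T) + 1))
        else (if y ∈ T then f (#(S \ T) - 1) else f #(S \ T)) := by
    intro x hx y hy
    have hcard := card_insert_erase_sdiff (T := T) hx (mem_compl.1 hy)
    split_ifs at hcard ⊢ <;> congr 1 <;> omega
  have hsplit : ∀ (A : Finset α) (u v : M),
      ∑ z ∈ A, (if z ∈ T then u else v) = #(A ∩ T) • u + #(A \ T) • v := fun A u v => by
    rw [sum_ite, sum_const, sum_const, filter_mem_eq_inter, filter_notMem_eq_sdiff]
  have hinter : Sᶜ ∩ T = T \ S := by rw [inter_comm, sdiff_eq_inter_compl]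
  have hsdiff : Sᶜ \ T = (S ∪ T)ᶜ := by rw [compl_union, sdiff_eq_inter_compl]
  rw [sum_congr rfl fun x hx => sum_congr rfl (hvalue x hx)]
  simp only [sum_ite_irrel, hsplit, hinter, hsdiff, smul_add, ← mul_smul, add_smul]
  abel

lemma card_inter_add_two_mul_card_sdiff_add_card_compl_union (h : #S = #T) :
    #(S ∩ T) + 2 * #(S \ T) + #(S ∪ T)ᶜ = Fintype.card α := by
  have hinter := card_inter_add_card_sdiff S T
  have hunion := card_union_add_card_inter S T
  have hcompl := card_add_card_compl (S ∪ T)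
  omega

end Exchange

section JohnsonMatrix

variable (R α : Type*) [DecidableEq α]

/-- The matrix `J_i` over an arbitrary ground set `α`, with entries in `R`: the `0`-`1` matrix,
indexed by the `m`-element subsets of `α`, of the relation `|S ∩ T| = m - i`, which is written
without subtraction. -/
def johnsonMatrix [Zero R] [One R] (m i : ℕ) :
    Matrix {S : Finset α // #S = m} {S : Finset α // #S = m} R :=
  fun S T => if #(S.1 ∩ T.1) + i = m then 1 else 0

variable {R α} {m : ℕ}

lemma johnsonMatrix_apply [Zero R] [One R] (i : ℕ) (S T : {S : Finset α // #S = m}) :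
    johnsonMatrix R α m i S T = if #(S.1 \ T.1) = i then 1 else 0 := by
  have hST := card_sdiff_add_card_inter S.1 T.1
  rw [S.2] at hST
  rw [johnsonMatrix]
  congr 1
  exact propext (by omega)

variable [Fintype α]

lemma johnsonMatrix_one_mul_apply [NonAssocSemiring R] (i : ℕ)
    (S T : {S : Finset α // #S = m}) :
    (johnsonMatrix R α m 1 * johnsonMatrix R α m i) S T
      = ∑ x ∈ S.1, ∑ y ∈ S.1ᶜ, if #(insert y (S.1.erase x) \ T.1) = i then 1 else 0 := by
  obtain ⟨S, rfl⟩ := S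
  rw [← sum_card_sdiff_eq_one S fun U => if #(U \ T.1) = i then (1 : R) else 0,
    ← filter_filter, sum_filter, ← sum_subtype_eq_sum_filter, subtype_univ, Matrix.mul_apply]
  simp only [johnsonMatrix_apply, boole_mul]

theorem johnson_recursion_general [CommRing R] (i : ℕ) (hi : 1 ≤ i) :
    johnsonMatrix R α m 1 * johnsonMatrix R α m i
      = (((m : R) - i + 1) * ((Fintype.card α : R) - m - i + 1)) • johnsonMatrix R α m (i - 1)
        + ((i : R) * ((Fintype.card α : R) - 2 * i)) • johnsonMatrix R α m i
        + (((i : R) + 1) ^ 2) • johnsonMatrix R α m (i + 1) := by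
  ext ⟨S, hS⟩ ⟨T, hT⟩
  rw [johnsonMatrix_one_mul_apply,
    sum_card_insert_erase_sdiff S T fun b => if b = i then (1 : R) else 0]
  simp only [Matrix.add_apply, Matrix.smul_apply, johnsonMatrix_apply, nsmul_eq_mul, smul_eq_mul]
  have hST : #S = #T := hS.trans hT.symm
  have hm : (m : R) = #(S ∩ T) + #(S \ T) := by
    rw [← hS, ← card_inter_add_card_sdiff S T, Nat.cast_add]
  rw [← card_sdiff_comm hST, ← card_inter_add_two_mul_card_sdiff_add_card_compl_union hST, hm]
  generalize #(S ∩ T) = a, #(S \ T) = b, #(S ∪ T)ᶜ = d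
  have hpred : b = i - 1 ↔ b + 1 = i := by omega
  have hsucc : b - 1 = i ↔ b = i + 1 := by omega
  simp only [hpred, hsucc]
  refine congr_arg₂ _ (congr_arg₂ _ ?_ ?_) ?_
  all_goals
    split_ifs with h
    · subst h
      push_cast
      ring
    · simp only [mul_zero]

end JohnsonMatrix

/-- Three-term recursion for the Johnson-type matrices:
`J_1 * J_i = (m−i+1)(N−m−i+1)·J_{i−1} + i(N−2i)·J_i + (i+1)²·J_{i+1}` for `i ≥ 1`. -/
theorem johnson_recursion (N m : ℕ) (hm : m ≤ N) (i : ℕ) (hi : 1 ≤ i) :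
    J N m 1 * J N m i
      = (((m : ℤ) - i + 1) * ((N : ℤ) - m - i + 1)) • J N m (i - 1)
        + ((i : ℤ) * ((N : ℤ) - 2 * i)) • J N m i
        + (((i : ℤ) + 1) ^ 2) • J N m (i + 1) := by
  simpa only [Fintype.card_fin] using! johnson_recursion_general (R := ℤ) (α := Fin N) i hi
end

section
/- Let G be a simple graph on Fin n with exactly m edges, let N = C(n,2), and let i ≥ 1 be a natural number. Then for every simple graph H on Fin n, the number of pairs (K, H') with K a member of PD_i(G) and H' a member of PD_1(K) isomorphic-as-labelled-graph-equal to H (i.e. the multiplicity of H in the multiset union of PD_1 over all members of PD_i(G), counted with multiplicity) equals, as integers, (m−i+1)(N−m−i+1) times the multiplicity of H in PD_{i−1}(G), plus i·(N−2i) times the multiplicity of H in PD_i(G), plus (i+1)^2 times the multiplicity of H in PD_{i+1}(G). -/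
/-!
Identify a graph with its set of edges, a subset of the `N`-element set `U` of all edges of the
complete graph. Exchanging `i` edges against `i` non-edges reaches, exactly once, every set at
distance `i` from `E(G)` in the Johnson graph of `U`, so `PD i G` is the sphere of radius `i`
about `E(G)`. By symmetry of the distance, the multiplicity of `H` in the iterated deck is the
number of neighbours of `E(H)` lying on that sphere.

Replacing `y ∈ B` by `x ∈ U \ B` changes the distance from `A` to `B` by `[y ∈ A] - [x ∈ A]`. Hence
only distances `i - 1`, `i` and `i + 1` between `G` and `H` contribute, and the three coefficients
are the intersection numbers of the Johnson graph.
-/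

open Finset

noncomputable section
open scoped Classical

/-- Two simple graphs on `Fin n` are related iff they are isomorphic. -/
def isoSetoid (n : ℕ) : Setoid (SimpleGraph (Fin n)) where
  r G H := Nonempty (G ≃g H)
  iseqv := ⟨fun _ => ⟨SimpleGraph.Iso.refl⟩, fun h => ⟨h.some.symm⟩,
    fun h h' => ⟨h.some.trans h'.some⟩⟩

/-- The isomorphism class of a simple graph on `Fin n`. -/
def isoClass {n : ℕ} (G : SimpleGraph (Fin n)) : Quotient (isoSetoid n) :=
  Quotient.mk (isoSetoid n) G

/-- The `i`-edge deck `ED_i(G)`: the multiset of graphs `G − X` over all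
`i`-element subsets `X` of the edge set of `G`. -/
def ED {n : ℕ} (i : ℕ) (G : SimpleGraph (Fin n)) : Multiset (SimpleGraph (Fin n)) :=
  (G.edgeFinset.powersetCard i).val.map fun X =>
    G.deleteEdges (X : Set (Sym2 (Fin n)))

/-- The perturbed `i`-deck `PD_i(G)`: the multiset of graphs `(G − X) + Y` over all
pairs of an `i`-element subset `X` of the edges of `G` and an `i`-element set `Y`
of non-edges of `G`. -/
def PD {n : ℕ} (i : ℕ) (G : SimpleGraph (Fin n)) : Multiset (SimpleGraph (Fin n)) :=
  ((G.edgeFinset.powersetCard i) ×ˢ (Gᶜ.edgeFinset.powersetCard i)).val.map fun p =>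
    SimpleGraph.fromEdgeSet
      (((G.edgeFinset \ p.1) ∪ p.2 : Finset (Sym2 (Fin n))) : Set (Sym2 (Fin n)))

/-- The modified `i`-deck `MD_i(G)`: the multiset of graphs `(G − X) + Y` over all
pairs of an `i`-element subset `X` of the edges of `G` and an `i`-element set `Y`
of non-edges of `G − X` (so `Y` may reuse edges of `X`). -/
def MD {n : ℕ} (i : ℕ) (G : SimpleGraph (Fin n)) : Multiset (SimpleGraph (Fin n)) :=
  (G.edgeFinset.powersetCard i).val.bind fun X =>
    ((G.deleteEdges (X : Set (Sym2 (Fin n))))ᶜ.edgeFinset.powersetCard i).val.map fun Y =>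
      SimpleGraph.fromEdgeSet
        (((G.edgeFinset \ X) ∪ Y : Finset (Sym2 (Fin n))) : Set (Sym2 (Fin n)))

section JohnsonGraph

variable {α : Type*} [DecidableEq α] {U A B : Finset α} {i k : ℕ}

/-- The sphere of radius `k` about `A` in the Johnson graph of `U`, whose vertices are the
subsets of `U` with as many elements as `A`, the distance from `A` to `B` being `#(A \ B)`. -/
def johnsonSphere (U : Finset α) (k : ℕ) (A : Finset α) : Finset (Finset α) :=
  {B ∈ U.powerset | #B = #A ∧ #(A \ B) = k}

lemma mem_johnsonSphere : B ∈ johnsonSphere U k A ↔ B ⊆ U ∧ #B = #A ∧ #(A \ B) = k := by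
  simp [johnsonSphere]

lemma mem_johnsonSphere_comm (hA : A ⊆ U) (hB : B ⊆ U) :
    B ∈ johnsonSphere U k A ↔ A ∈ johnsonSphere U k B := by
  simp only [mem_johnsonSphere, hA, hB, true_and, eq_comm (a := #B)]
  refine and_congr_right fun h => ?_
  rw [card_sdiff_comm h]

lemma sdiff_sdiff_union_of_disjoint {X Y : Finset α} (hX : X ⊆ A) (hY : Disjoint Y A) :
    A \ (A \ X ∪ Y) = X := by
  rw [sdiff_union_distrib, Finset.sdiff_sdiff_eq_self hX, hY.symm.sdiff_eq_left,
    inter_eq_left.2 hX]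

lemma sdiff_union_sdiff_of_disjoint {X Y : Finset α} (hY : Disjoint Y A) :
    (A \ X ∪ Y) \ A = Y := by
  rw [union_sdiff_distrib, sdiff_eq_empty_iff_subset.2 sdiff_subset, empty_union,
    hY.sdiff_eq_left]

lemma injOn_sdiff_union (A : Finset α) :
    Set.InjOn (fun p : Finset α × Finset α => A \ p.1 ∪ p.2) {p | p.1 ⊆ A ∧ Disjoint p.2 A} := by
  rintro ⟨X, Y⟩ ⟨hX, hY⟩ ⟨X', Y'⟩ ⟨hX', hY'⟩ (h : A \ X ∪ Y = A \ X' ∪ Y')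
  refine Prod.ext ?_ ?_
  · rw [← sdiff_sdiff_union_of_disjoint hX hY, h, sdiff_sdiff_union_of_disjoint hX' hY']
  · rw [← sdiff_union_sdiff_of_disjoint (X := X) hY, h, sdiff_union_sdiff_of_disjoint hY']

lemma image_sdiff_union_eq_johnsonSphere (hA : A ⊆ U) (k : ℕ) :
    (A.powersetCard k ×ˢ (U \ A).powersetCard k).image (fun p => A \ p.1 ∪ p.2)
      = johnsonSphere U k A := by
  ext B
  simp only [mem_image, mem_product, mem_powersetCard, mem_johnsonSphere, Prod.exists]
  constructor
  · rintro ⟨X, Y, ⟨⟨hX, rfl⟩, hY, hXY⟩, rfl⟩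
    have hYA : Disjoint Y A := disjoint_of_subset_left hY sdiff_disjoint
    have hAX : A \ (A \ X ∪ Y) = X := sdiff_sdiff_union_of_disjoint hX hYA
    refine ⟨union_subset (sdiff_subset.trans hA) (hY.trans sdiff_subset), ?_, by rw [hAX]⟩
    rw [← card_sdiff_eq_card_sdiff_iff, sdiff_union_sdiff_of_disjoint hYA, hAX, hXY]
  · rintro ⟨hB, hBA, rfl⟩
    refine ⟨A \ B, B \ A, ⟨⟨sdiff_subset, rfl⟩, sdiff_subset_sdiff hB Subset.rfl,
      card_sdiff_comm hBA⟩, ?_⟩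
    rw [sdiff_sdiff_right_self, inf_eq_inter, inter_comm, union_comm, sdiff_union_inter]

lemma johnsonSphere_val (hA : A ⊆ U) (k : ℕ) :
    (johnsonSphere U k A).val
      = (A.powersetCard k ×ˢ (U \ A).powersetCard k).val.map fun p => A \ p.1 ∪ p.2 := by
  rw [← image_sdiff_union_eq_johnsonSphere hA]
  refine image_val_of_injOn ((injOn_sdiff_union A).mono ?_)
  rintro ⟨X, Y⟩ h
  simp only [mem_coe, mem_product, mem_powersetCard] at h
  exact ⟨h.1.1, disjoint_of_subset_left h.2.1 sdiff_disjoint⟩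

lemma johnsonSphere_one_val (hB : B ⊆ U) :
    (johnsonSphere U 1 B).val = (B ×ˢ (U \ B)).val.map fun p => B \ {p.1} ∪ {p.2} := by
  rw [johnsonSphere_val hB, powersetCard_one, powersetCard_one, ← prodMap_map_product, map_val,
    Multiset.map_map]
  rfl

lemma card_sdiff_exchange {x y : α} (hy : y ∈ B) (hx : x ∉ B) :
    #(A \ (B \ {y} ∪ {x})) + (if x ∈ A then 1 else 0)
      = #(A \ B) + if y ∈ A then 1 else 0 := by
  have hremove : #(A \ (B \ {y})) = #(A \ B) + if y ∈ A then 1 else 0 := by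
    rw [sdiff_singleton_eq_erase]
    split_ifs with h
    · rw [sdiff_erase h, card_insert_of_notMem (by simp [hy])]
    · rw [add_zero, ← sdiff_inter_self_left A (B.erase y), ← sdiff_inter_self_left A B,
        inter_erase, erase_eq_of_notMem (by simp [h])]
  have hadd : #(A \ (B \ {y} ∪ {x})) + (if x ∈ A then 1 else 0) = #(A \ (B \ {y})) := by
    rw [union_comm, ← insert_eq, sdiff_insert]
    split_ifs with h
    · exact card_erase_add_one (by simp [h, hx])
    · rw [erase_eq_of_notMem (by simp [h]), add_zero]
  rw [hadd, hremove]

lemma card_johnsonSphere_one_inter_eq_card_filter (hB : B ⊆ U) (hAB : #B = #A) (i : ℕ) :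
    #(johnsonSphere U 1 B ∩ johnsonSphere U i A)
      = #{p ∈ B ×ˢ (U \ B) |
          #(A \ B) + (if p.1 ∈ A then 1 else 0) = i + if p.2 ∈ A then 1 else 0} := by
  rw [← filter_mem_eq_inter, card_def, filter_val, ← Multiset.countP_eq_card_filter,
    johnsonSphere_one_val hB, Multiset.countP_map, ← filter_val, ← card_def]
  refine congrArg card (filter_congr ?_)
  rintro ⟨y, x⟩ hyx
  obtain ⟨hy, hx⟩ := mem_product.1 hyx
  have hneighbour : B \ {y} ∪ {x} ∈ johnsonSphere U 1 B := by
    rw [← mem_val, johnsonSphere_one_val hB]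
    exact Multiset.mem_map_of_mem _ hyx
  obtain ⟨hsub, hcard, -⟩ := mem_johnsonSphere.1 hneighbour
  have hdist := card_sdiff_exchange (A := A) hy (mem_sdiff.1 hx).2
  simp only [mem_johnsonSphere, hsub, hcard, hAB, true_and, ← hdist]
  omega

lemma card_johnsonSphere_one_inter_of_mem_succ (hA : A ⊆ U) (hB : B ∈ johnsonSphere U (i + 1) A) :
    #(johnsonSphere U 1 B ∩ johnsonSphere U i A) = (i + 1) ^ 2 := by
  obtain ⟨hBU, hAB, hdist⟩ := mem_johnsonSphere.1 hB
  have hpairs : {p ∈ B ×ˢ (U \ B) |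
      #(A \ B) + (if p.1 ∈ A then 1 else 0) = i + if p.2 ∈ A then 1 else 0}
        = (B \ A) ×ˢ (A \ B) := by
    ext ⟨y, x⟩
    simp only [hdist, mem_filter, mem_product, mem_sdiff]
    have := @hA x
    split_ifs <;> grind
  rw [card_johnsonSphere_one_inter_eq_card_filter hBU hAB, hpairs, card_product,
    card_sdiff_comm hAB, hdist, sq]

lemma card_inter_of_mem_johnsonSphere (hB : B ∈ johnsonSphere U i A) :
    (#(B ∩ A) : ℤ) = #A - i := by
  obtain ⟨-, -, hdist⟩ := mem_johnsonSphere.1 hB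
  rw [← hdist, inter_comm, ← card_inter_add_card_sdiff A B]
  push_cast
  ring

lemma card_sdiff_sdiff_of_mem_johnsonSphere (hA : A ⊆ U) (hB : B ∈ johnsonSphere U i A) :
    (#((U \ B) \ A) : ℤ) = #U - #A - i := by
  obtain ⟨hBU, hAB, hdist⟩ := mem_johnsonSphere.1 hB
  have hunion := card_sdiff_add_card_eq_card (union_subset hBU hA)
  have hsdiff := card_sdiff_add_card A B
  rw [sdiff_sdiff_left, sup_eq_union]
  rw [union_comm] at hsdiff
  omega

lemma card_johnsonSphere_one_inter_of_mem (hA : A ⊆ U) (hB : B ∈ johnsonSphere U i A) :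
    (#(johnsonSphere U 1 B ∩ johnsonSphere U i A) : ℤ) = i * (#U - 2 * i) := by
  obtain ⟨hBU, hAB, hdist⟩ := mem_johnsonSphere.1 hB
  have hpairs : {p ∈ B ×ˢ (U \ B) |
      #(A \ B) + (if p.1 ∈ A then 1 else 0) = i + if p.2 ∈ A then 1 else 0}
        = (B ∩ A) ×ˢ (A \ B) ∪ (B \ A) ×ˢ ((U \ B) \ A) := by
    ext ⟨y, x⟩
    simp only [hdist, mem_filter, mem_union, mem_product, mem_inter, mem_sdiff]
    have := @hA x
    split_ifs <;> grind
  have hdisj : Disjoint ((B ∩ A) ×ˢ (A \ B)) ((B \ A) ×ˢ ((U \ B) \ A)) :=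
    disjoint_product.2 (.inl (disjoint_sdiff_inter B A).symm)
  rw [card_johnsonSphere_one_inter_eq_card_filter hBU hAB, hpairs,
    card_union_of_disjoint hdisj, card_product, card_product, card_sdiff_comm hAB, hdist]
  push_cast
  rw [card_inter_of_mem_johnsonSphere hB, card_sdiff_sdiff_of_mem_johnsonSphere hA hB]
  ring

lemma card_johnsonSphere_one_inter_succ_of_mem (hA : A ⊆ U) (hB : B ∈ johnsonSphere U i A) :
    (#(johnsonSphere U 1 B ∩ johnsonSphere U (i + 1) A) : ℤ) = (#A - i) * (#U - #A - i) := by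
  obtain ⟨hBU, hAB, hdist⟩ := mem_johnsonSphere.1 hB
  have hpairs : {p ∈ B ×ˢ (U \ B) |
      #(A \ B) + (if p.1 ∈ A then 1 else 0) = i + 1 + if p.2 ∈ A then 1 else 0}
        = (B ∩ A) ×ˢ ((U \ B) \ A) := by
    ext ⟨y, x⟩
    simp only [hdist, mem_filter, mem_product, mem_inter, mem_sdiff]
    split_ifs <;> grind
  rw [card_johnsonSphere_one_inter_eq_card_filter hBU hAB, hpairs, card_product]
  push_cast
  rw [card_inter_of_mem_johnsonSphere hB, card_sdiff_sdiff_of_mem_johnsonSphere hA hB]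

lemma mem_johnsonSphere_of_mem_one_inter_succ {C : Finset α} (hB : B ⊆ U)
    (hC : C ∈ johnsonSphere U 1 B ∩ johnsonSphere U (i + 1) A) :
    B ∈ johnsonSphere U i A ∨ B ∈ johnsonSphere U (i + 1) A ∨ B ∈ johnsonSphere U (i + 2) A := by
  simp only [mem_inter, mem_johnsonSphere] at hC ⊢
  obtain ⟨⟨-, hCB, hBC⟩, -, hCA, hAC⟩ := hC
  have htriangle (S T R : Finset α) : #(S \ R) ≤ #(S \ T) + #(T \ R) :=
    (card_le_card (sdiff_triangle S T R)).trans (card_union_le _ _)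
  have hupper := htriangle A C B
  have hlower := htriangle A B C
  rw [card_sdiff_comm hCB] at hupper
  simp only [hB, ← hCB, hCA, true_and]
  omega

theorem card_johnsonSphere_one_inter_succ (hA : A ⊆ U) (hB : B ⊆ U) (i : ℕ) :
    (#(johnsonSphere U 1 B ∩ johnsonSphere U (i + 1) A) : ℤ)
      = (#A - i) * (#U - #A - i) * (if B ∈ johnsonSphere U i A then 1 else 0)
        + (i + 1) * (#U - 2 * (i + 1)) * (if B ∈ johnsonSphere U (i + 1) A then 1 else 0)
        + (i + 2) ^ 2 * (if B ∈ johnsonSphere U (i + 2) A then 1 else 0) := by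
  have hunique {k l : ℕ} (hk : B ∈ johnsonSphere U k A) (hkl : k ≠ l) : B ∉ johnsonSphere U l A :=
    fun h => hkl ((mem_johnsonSphere.1 hk).2.2.symm.trans (mem_johnsonSphere.1 h).2.2)
  by_cases hpred : B ∈ johnsonSphere U i A
  · rw [card_johnsonSphere_one_inter_succ_of_mem hA hpred, if_pos hpred,
      if_neg (hunique hpred (by lia)), if_neg (hunique hpred (by lia))]
    ring
  by_cases hself : B ∈ johnsonSphere U (i + 1) A
  · rw [card_johnsonSphere_one_inter_of_mem hA hself, if_neg hpred, if_pos hself,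
      if_neg (hunique hself (by lia))]
    push_cast
    ring
  by_cases hsucc : B ∈ johnsonSphere U (i + 2) A
  · rw [card_johnsonSphere_one_inter_of_mem_succ hA hsucc, if_neg hpred, if_neg hself,
      if_pos hsucc]
    push_cast
    ring
  have hempty : johnsonSphere U 1 B ∩ johnsonSphere U (i + 1) A = ∅ :=
    eq_empty_of_forall_notMem fun C hC => by
      rcases mem_johnsonSphere_of_mem_one_inter_succ hB hC with h | h | h <;> contradiction
  simp [hempty, hpred, hself, hsucc]

end JohnsonGraph

section EdgeFinset

variable {V : Type*} [Fintype V] [DecidableEq V]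

lemma edgeFinset_compl (G : SimpleGraph V) [Fintype G.edgeSet] [Fintype Gᶜ.edgeSet] :
    Gᶜ.edgeFinset = (⊤ : SimpleGraph V).edgeFinset \ G.edgeFinset := by
  rw [← coe_inj, coe_sdiff, SimpleGraph.coe_edgeFinset, SimpleGraph.coe_edgeFinset,
    SimpleGraph.coe_edgeFinset, ← SimpleGraph.edgeSet_sdiff, top_sdiff]

lemma edgeFinset_fromEdgeSet_coe {Z : Finset (Sym2 V)}
    [Fintype (SimpleGraph.fromEdgeSet (Z : Set (Sym2 V))).edgeSet]
    (hZ : Z ⊆ (⊤ : SimpleGraph V).edgeFinset) :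
    (SimpleGraph.fromEdgeSet (Z : Set (Sym2 V))).edgeFinset = Z := by
  have hdiag : Disjoint (Z : Set (Sym2 V)) Sym2.diagSet := by
    rw [← coe_subset, SimpleGraph.coe_edgeFinset, SimpleGraph.edgeSet_top] at hZ
    exact Set.disjoint_left.2 fun _ he => hZ he
  rw [← coe_inj, SimpleGraph.coe_edgeFinset, SimpleGraph.edgeSet_fromEdgeSet, hdiag.sdiff_eq_left]

end EdgeFinset

section PerturbedDeck

variable {n : ℕ}

lemma map_edgeFinset_PD (k : ℕ) (G : SimpleGraph (Fin n)) :
    (PD k G).map (fun K => K.edgeFinset)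
      = (johnsonSphere (⊤ : SimpleGraph (Fin n)).edgeFinset k G.edgeFinset).val := by
  have hG : G.edgeFinset ⊆ (⊤ : SimpleGraph (Fin n)).edgeFinset :=
    SimpleGraph.edgeFinset_mono le_top
  rw [PD, Multiset.map_map, johnsonSphere_val hG, edgeFinset_compl]
  refine Multiset.map_congr rfl fun p hp => ?_
  simp only [mem_val, mem_product, mem_powersetCard] at hp
  have hsub : G.edgeFinset \ p.1 ∪ p.2 ⊆ (⊤ : SimpleGraph (Fin n)).edgeFinset :=
    union_subset (sdiff_subset.trans hG) (hp.2.1.trans sdiff_subset)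
  rw [Function.comp_apply]
  -- The two sides carry different `Fintype` instances on the edge set.
  convert edgeFinset_fromEdgeSet_coe hsub

lemma count_PD (k : ℕ) (G H : SimpleGraph (Fin n)) :
    (PD k G).count H = if H.edgeFinset ∈
      johnsonSphere (⊤ : SimpleGraph (Fin n)).edgeFinset k G.edgeFinset then 1 else 0 := by
  rw [← Multiset.count_map_eq_count' (fun K : SimpleGraph (Fin n) => K.edgeFinset) _
      (fun _ _ => SimpleGraph.edgeFinset_inj.1),
    map_edgeFinset_PD, Multiset.count_eq_of_nodup (nodup _)]
  rfl

lemma count_bind_PD_one (i : ℕ) (G H : SimpleGraph (Fin n)) :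
    ((PD i G).bind (PD 1)).count H
      = #(johnsonSphere (⊤ : SimpleGraph (Fin n)).edgeFinset 1 H.edgeFinset ∩
          johnsonSphere (⊤ : SimpleGraph (Fin n)).edgeFinset i G.edgeFinset) := by
  set U := (⊤ : SimpleGraph (Fin n)).edgeFinset
  have hcount (K : SimpleGraph (Fin n)) :
      (PD 1 K).count H = if K.edgeFinset ∈ johnsonSphere U 1 H.edgeFinset then 1 else 0 := by
    simp only [count_PD, mem_johnsonSphere_comm (SimpleGraph.edgeFinset_mono (le_top (a := K)))
      (SimpleGraph.edgeFinset_mono (le_top (a := H))), U]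
  calc
    _ = ((PD i G).map fun K =>
          if K.edgeFinset ∈ johnsonSphere U 1 H.edgeFinset then 1 else 0).sum := by
      simp only [Multiset.count_bind, hcount]
    _ = ∑ C ∈ johnsonSphere U i G.edgeFinset,
          if C ∈ johnsonSphere U 1 H.edgeFinset then 1 else 0 := by
      rw [← sum_map_val, ← map_edgeFinset_PD, Multiset.map_map]
      rfl
    _ = _ := by
      rw [← card_filter, filter_mem_eq_inter, inter_comm]

end PerturbedDeck

/-- Recursion for perturbed decks: for an `m`-edge graph `G` on `Fin n`, with
`N = C(n,2)` and `i ≥ 1`, the multiplicity of any graph `H` in the multiset union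
of `PD_1` over the members of `PD_i(G)` equals
`(m−i+1)(N−m−i+1)` times its multiplicity in `PD_{i−1}(G)`, plus
`i(N−2i)` times its multiplicity in `PD_i(G)`, plus
`(i+1)²` times its multiplicity in `PD_{i+1}(G)`. -/
theorem perturbed_deck_recursion (n m : ℕ) (G : SimpleGraph (Fin n))
    (hG : G.edgeFinset.card = m) (i : ℕ) (hi : 1 ≤ i) (H : SimpleGraph (Fin n)) :
    (((PD i G).bind (PD 1)).count H : ℤ)
      = ((m : ℤ) - i + 1) * ((n.choose 2 : ℤ) - m - i + 1) * ((PD (i - 1) G).count H : ℤ)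
        + (i : ℤ) * ((n.choose 2 : ℤ) - 2 * i) * ((PD i G).count H : ℤ)
        + ((i : ℤ) + 1) ^ 2 * ((PD (i + 1) G).count H : ℤ) := by
  obtain ⟨k, rfl⟩ := Nat.exists_eq_add_of_le' hi
  have hN : #(⊤ : SimpleGraph (Fin n)).edgeFinset = n.choose 2 := by
    rw [SimpleGraph.card_edgeFinset_top_eq_card_choose_two, Fintype.card_fin]
  rw [count_bind_PD_one, count_PD, count_PD, count_PD, Nat.add_sub_cancel,
    card_johnsonSphere_one_inter_succ (SimpleGraph.edgeFinset_mono le_top)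
      (SimpleGraph.edgeFinset_mono le_top), hG, hN]
  push_cast
  ring

end
end

section
/- For every natural number k there exists a polynomial p over ℚ with zero constant coefficient (p.coeff 0 = 0) such that, as Ω × Ω matrices over ℚ, J_k = p(B_1) + (−1)^k · \binom{m}{k} · I, where p(B_1) denotes the evaluation of p at the matrix B_1 and I is the identity matrix. -/
/-!
Write `b_k(a) = C(a, m - k)`, so that `B_k(T, S) = b_k(|T ∩ S|)`: what is left of `S` after removing
`k` elements is an arbitrary `(m - k)`-subset of `S ∩ T`. Summing `b_k(|T ∩ ·|)` over the removals
of one element from an `m`-set multiplies it by `k`; summing over the additions of one element to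
an `(m - 1)`-set turns it into `(N - 2m + k + 1) b_k + (k + 1) b_{k+1}`. Composing the two,

`B_k B_1 = (k + 1)² B_{k+1} + k (N - 2m + k + 1) B_k`.

Hence `(k!)² B_k` is the product of the `B_1 - j (N - 2m + j + 1)` over `j < k`; for `k ≥ 1` the
factor `j = 0` is `B_1` itself, so `B_k` is a polynomial in `B_1` without constant term. Binomial
inversion gives `J_k = ∑_{i ≤ k} (-1)^{k-i} C(m - i, k - i) B_i`, whose term `i = 0` is
`(-1)^k C(m, k) I`.
-/

open Finset

/-- `B N m k` is the Ω × Ω integer matrix whose `(T, S)` entry is the number of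
pairs `(X, Y)` with `X ⊆ S`, `|X| = k`, `Y ∩ (S \ X) = ∅`, `|Y| = k` and
`(S \ X) ∪ Y = T`.  It encodes the modified `k`-deck operation: remove `k`
elements, then add `k` elements not currently present (an added element may
coincide with a removed one). -/
def B (N m k : ℕ) : Matrix (Omega N m) (Omega N m) ℤ := fun T S =>
  ((Finset.univ.filter (fun p : Finset (Fin N) × Finset (Fin N) =>
      p.1 ⊆ (S : Finset (Fin N)) ∧ p.1.card = k ∧
      p.2 ∩ ((S : Finset (Fin N)) \ p.1) = ∅ ∧ p.2.card = k ∧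
      ((S : Finset (Fin N)) \ p.1) ∪ p.2 = (T : Finset (Fin N)))).card : ℤ)

section FinsetSums

variable {α M : Type*} [DecidableEq α] [AddCommMonoid M]

lemma sum_card_inter_erase (f : ℕ → M) (S T : Finset α) :
    ∑ x ∈ S, f #(T ∩ S.erase x)
      = #(T ∩ S) • f (#(T ∩ S) - 1) + #(S \ T) • f #(T ∩ S) := by
  rw [← sum_inter_add_sum_sdiff S T, inter_comm T S]
  congr 1
  · refine sum_eq_card_nsmul fun x hx => ?_
    rw [inter_erase, inter_comm T S, card_erase_of_mem hx]
  · refine sum_eq_card_nsmul fun x hx => ?_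
    have hxT : x ∉ T ∩ S := fun h => (mem_sdiff.1 hx).2 (mem_inter.1 h).1
    rw [inter_erase, erase_eq_of_notMem hxT, inter_comm T S]

lemma sum_card_inter_insert [Fintype α] (f : ℕ → M) (S T : Finset α) :
    ∑ y ∈ Sᶜ, f #(T ∩ insert y S)
      = #(T \ S) • f (#(T ∩ S) + 1) + #(T ∪ S)ᶜ • f #(T ∩ S) := by
  have h_mem : Sᶜ ∩ T = T \ S := by rw [inter_comm, sdiff_eq_inter_compl]
  have h_notMem : Sᶜ \ T = (T ∪ S)ᶜ := by rw [sdiff_eq_inter_compl, compl_union, inter_comm]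
  rw [← sum_inter_add_sum_sdiff Sᶜ T, h_mem, h_notMem]
  congr 1
  · refine sum_eq_card_nsmul fun y hy => ?_
    obtain ⟨hyT, hyS⟩ := mem_sdiff.1 hy
    rw [inter_insert_of_mem hyT, card_insert_of_notMem fun h => hyS (mem_inter.1 h).2]
  · refine sum_eq_card_nsmul fun y hy => ?_
    have hyT : y ∉ T := fun h => mem_compl.1 hy (mem_union_left S h)
    rw [inter_insert_of_notMem hyT]

end FinsetSums

section BinomialInversion

lemma sum_neg_one_pow_mul_choose_of_le {n k : ℕ} (h : n ≤ k) :
    ∑ j ∈ range (k + 1), (-1) ^ j * (n.choose j : ℤ) = if n = 0 then 1 else 0 := by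
  cases n with
  | zero => simp [sum_range_succ']
  | succ n => simp [Int.alternating_sum_range_choose_eq_choose, Nat.choose_eq_zero_of_lt h]

lemma sum_neg_one_pow_mul_choose_mul_choose {a q k : ℕ} (h : a ≤ q + k) :
    ∑ j ∈ range (k + 1), (-1) ^ j * ((q + j).choose j : ℤ) * (a.choose (q + j) : ℤ)
      = if a = q then 1 else 0 := by
  have h_term (j : ℕ) : (-1) ^ j * ((q + j).choose j : ℤ) * (a.choose (q + j) : ℤ)
      = a.choose q * ((-1) ^ j * ((a - q).choose j : ℤ)) := by
    have h_mul : (a.choose (q + j) * (q + j).choose j : ℤ) = a.choose q * (a - q).choose j := by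
      have := Nat.choose_mul (n := a) (Nat.le_add_right q j)
      rw [Nat.add_sub_cancel_left, Nat.choose_symm_add] at this
      exact_mod_cast this
    linear_combination (-1 : ℤ) ^ j * h_mul
  simp only [h_term]
  rw [← mul_sum, sum_neg_one_pow_mul_choose_of_le (Nat.sub_le_iff_le_add'.2 h)]
  rcases lt_trichotomy a q with h | rfl | h
  · simp [Nat.choose_eq_zero_of_lt h, h.ne]
  · simp
  · simp [(Nat.sub_pos_of_lt h).ne', h.ne']

end BinomialInversion

/-- The number `C(a, m - k)` of `(m - k)`-subsets of an `a`-set, read as `0` when `m < k`. It is the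
entry of `B_k` at two `m`-sets with `a` common elements. -/
def modifiedDeckEntry (m k a : ℕ) : ℤ := if k ≤ m then (a.choose (m - k) : ℤ) else 0

section modifiedDeckEntry

variable (m k a : ℕ)

lemma modifiedDeckEntry_add_one :
    modifiedDeckEntry m k (a + 1) = modifiedDeckEntry m k a + modifiedDeckEntry m (k + 1) a := by
  unfold modifiedDeckEntry
  rcases lt_trichotomy k m with h | rfl | h
  · obtain ⟨r, rfl⟩ := Nat.exists_eq_add_of_lt h
    rw [if_pos (by omega), if_pos (by omega), if_pos (by omega),
      show k + r + 1 - k = r + 1 by omega, show k + r + 1 - (k + 1) = r by omega,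
      Nat.choose_succ_succ' a r]
    push_cast
    ring
  · simp
  · rw [if_neg (by omega), if_neg (by omega), if_neg (by omega), add_zero]

lemma sub_mul_modifiedDeckEntry_succ :
    ((a : ℤ) - m + k + 1) * modifiedDeckEntry m (k + 1) a
      = (m - k) * modifiedDeckEntry m k a := by
  unfold modifiedDeckEntry
  rcases lt_trichotomy k m with h | rfl | h
  · obtain ⟨r, rfl⟩ := Nat.exists_eq_add_of_lt h
    rw [if_pos (by omega), if_pos (by omega),
      show k + r + 1 - k = r + 1 by omega, show k + r + 1 - (k + 1) = r by omega]
    have h_succ : (a.choose (r + 1) : ℤ) * (r + 1) = a.choose r * (a - r) := by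
      rcases le_or_gt r a with hr | hr
      · rw [← Nat.cast_sub hr]
        exact_mod_cast Nat.choose_succ_right_eq a r
      · simp [Nat.choose_eq_zero_of_lt hr, Nat.choose_eq_zero_of_lt (Nat.lt_succ_of_lt hr)]
    push_cast
    linear_combination -h_succ
  · simp
  · rw [if_neg (by omega), if_neg (by omega), mul_zero, mul_zero]

lemma mul_modifiedDeckEntry_sub_one :
    (a : ℤ) * modifiedDeckEntry m k (a - 1) = (a - m + k) * modifiedDeckEntry m k a := by
  cases a with
  | zero =>
    rcases lt_trichotomy k m with h | rfl | h
    · simp [modifiedDeckEntry, Nat.choose_eq_zero_of_lt (Nat.sub_pos_of_lt h)]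
    · simp
    · simp [modifiedDeckEntry, h.not_ge]
  | succ a =>
    rw [Nat.add_sub_cancel, modifiedDeckEntry_add_one]
    push_cast
    linear_combination -sub_mul_modifiedDeckEntry_succ m k a

lemma sum_neg_one_pow_mul_modifiedDeckEntry (ha : a ≤ m) :
    ∑ i ∈ range (k + 1), (-1) ^ (k - i) * ((m - i).choose (k - i) : ℤ) * modifiedDeckEntry m i a
      = if a + k = m then 1 else 0 := by
  rcases lt_or_ge m k with hmk | hkm
  · rw [if_neg (by omega)]
    refine sum_eq_zero fun i _ => ?_
    rcases le_or_gt i m with hi | hi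
    · simp [Nat.choose_eq_zero_of_lt (show m - i < k - i by omega)]
    · simp [modifiedDeckEntry, hi.not_ge]
  obtain ⟨q, rfl⟩ := Nat.exists_eq_add_of_le' hkm
  rw [← sum_flip, if_congr Nat.add_left_inj rfl rfl,
    ← sum_neg_one_pow_mul_choose_mul_choose ha]
  refine sum_congr rfl fun j hj => ?_
  have hjk : j ≤ k := mem_range_succ_iff.1 hj
  rw [modifiedDeckEntry, if_pos (by omega), Nat.sub_sub_self hjk,
    show q + k - (k - j) = q + j by omega]

variable {α : Type*} [DecidableEq α]

lemma sum_modifiedDeckEntry_erase {S : Finset α} (hS : #S = m) (T : Finset α) :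
    ∑ x ∈ S, modifiedDeckEntry m k #(T ∩ S.erase x) = k * modifiedDeckEntry m k #(T ∩ S) := by
  have h_card : (#(S \ T) : ℤ) + #(T ∩ S) = m := by
    rw [inter_comm, ← hS]
    exact_mod_cast card_sdiff_add_card_inter S T
  simp only [sum_card_inter_erase, nsmul_eq_mul]
  linear_combination mul_modifiedDeckEntry_sub_one m k #(T ∩ S)
    + modifiedDeckEntry m k #(T ∩ S) * h_card

lemma sum_modifiedDeckEntry_insert [Fintype α] {S T : Finset α} (hS : #S + 1 = m) (hT : #T = m) :
    ∑ y ∈ Sᶜ, modifiedDeckEntry m k #(T ∩ insert y S)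
      = ((Fintype.card α : ℤ) - 2 * m + k + 1) * modifiedDeckEntry m k #(T ∩ S)
        + (k + 1) * modifiedDeckEntry m (k + 1) #(T ∩ S) := by
  have h_sdiff : (#(T \ S) : ℤ) + #(T ∩ S) = m := by
    rw [← hT]
    exact_mod_cast card_sdiff_add_card_inter T S
  have h_compl : (#(T ∪ S)ᶜ : ℤ) + 2 * m = Fintype.card α + #(T ∩ S) + 1 := by
    have := card_compl_add_card (T ∪ S)
    have := card_union_add_card_inter T S
    omega
  simp only [sum_card_inter_insert, nsmul_eq_mul, modifiedDeckEntry_add_one]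
  linear_combination
    (modifiedDeckEntry m k #(T ∩ S) + modifiedDeckEntry m (k + 1) #(T ∩ S)) * h_sdiff
      + modifiedDeckEntry m k #(T ∩ S) * h_compl
      - sub_mul_modifiedDeckEntry_succ m k #(T ∩ S)

end modifiedDeckEntry

section Matrices

variable {N m : ℕ}

lemma B_apply (k : ℕ) (T S : Omega N m) :
    B N m k T S = modifiedDeckEntry m k #(T.1 ∩ S.1) := by
  have hS : #S.1 = m := S.2
  have hT : #T.1 = m := T.2
  unfold modifiedDeckEntry B
  split_ifs with hk
  · rw [← card_powersetCard, Nat.cast_inj]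
    refine card_nbij' (fun p => S.1 \ p.1) (fun R => (S.1 \ R, T.1 \ R)) ?_ ?_ ?_ ?_
    · rintro ⟨X, Y⟩ h
      simp only [mem_coe, mem_filter, mem_univ, true_and, mem_powersetCard] at h ⊢
      obtain ⟨hXS, hX, -, -, hXY⟩ := h
      rw [← hXY]
      exact ⟨subset_inter subset_union_left sdiff_subset, by rw [card_sdiff_of_subset hXS, hS, hX]⟩
    · intro R h
      simp only [mem_coe, mem_filter, mem_univ, true_and, mem_powersetCard] at h ⊢
      obtain ⟨hRT, hRS⟩ := subset_inter_iff.1 h.1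
      rw [Finset.sdiff_sdiff_eq_self hRS, card_sdiff_of_subset hRS, card_sdiff_of_subset hRT,
        hS, hT, h.2]
      exact ⟨sdiff_subset, Nat.sub_sub_self hk, sdiff_inter_self R T.1, Nat.sub_sub_self hk,
        union_sdiff_of_subset hRT⟩
    · rintro ⟨X, Y⟩ h
      simp only [mem_coe, mem_filter, mem_univ, true_and] at h ⊢
      obtain ⟨hXS, -, hY, -, hXY⟩ := h
      rw [← hXY, union_sdiff_cancel_left (disjoint_iff_inter_eq_empty.2 hY).symm,
        Finset.sdiff_sdiff_eq_self hXS]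
    · intro R h
      exact Finset.sdiff_sdiff_eq_self ((mem_powersetCard.1 h).1.trans inter_subset_right)
  · rw [Nat.cast_eq_zero, card_eq_zero, filter_eq_empty_iff]
    rintro ⟨X, Y⟩ - ⟨hXS, hX, -⟩
    exact hk (hX ▸ hS ▸ card_le_card hXS)

lemma J_eq_sum_B (N m k : ℕ) :
    J N m k = ∑ i ∈ range (k + 1), ((-1) ^ (k - i) * ((m - i).choose (k - i) : ℤ)) • B N m i := by
  ext S T
  have h_le : #(S.1 ∩ T.1) ≤ m := (card_le_card inter_subset_left).trans_eq S.2
  simp only [Matrix.sum_apply, Matrix.smul_apply, smul_eq_mul, B_apply,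
    sum_neg_one_pow_mul_modifiedDeckEntry m k _ h_le, J]

lemma B_zero (N m : ℕ) : B N m 0 = 1 := by
  ext T S
  rw [B_apply, modifiedDeckEntry, if_pos m.zero_le, Nat.sub_zero, Matrix.one_apply]
  split_ifs with h
  · rw [h, inter_self, S.2, Nat.choose_self, Nat.cast_one]
  · have h_not_subset : ¬T.1 ⊆ S.1 := fun hTS =>
      h (Subtype.ext (eq_of_subset_of_card_le hTS (S.2.trans T.2.symm).le))
    have h_lt : #(T.1 ∩ S.1) < m := (card_lt_card (inf_lt_left.2 h_not_subset)).trans_eq T.2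
    rw [Nat.choose_eq_zero_of_lt h_lt, Nat.cast_zero]

lemma sum_mul_B (k : ℕ) (g : Finset (Fin N) → ℤ) (S : Omega N m) :
    ∑ U : Omega N m, g U.1 * B N m k U S
      = ∑ X ∈ S.1.powersetCard k, ∑ Y ∈ (S.1 \ X)ᶜ.powersetCard k, g (S.1 \ X ∪ Y) := by
  let exchanges : Finset (Finset (Fin N) × Finset (Fin N)) :=
    {p | p.1 ⊆ S.1 ∧ #p.1 = k ∧ p.2 ∩ (S.1 \ p.1) = ∅ ∧ #p.2 = k}
  have h_mem (p : Finset (Fin N) × Finset (Fin N)) : p ∈ exchanges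
      ↔ p.1 ∈ S.1.powersetCard k ∧ p.2 ∈ (S.1 \ p.1)ᶜ.powersetCard k := by
    simp only [exchanges, mem_filter, mem_univ, true_and, mem_powersetCard, and_assoc,
      subset_compl_iff_disjoint_right, disjoint_iff_inter_eq_empty]
  have h_maps (p) (hp : p ∈ exchanges) : S.1 \ p.1 ∪ p.2 ∈ univ.powersetCard m := by
    obtain ⟨hX, hY⟩ := (h_mem p).1 hp
    obtain ⟨hXS, hX⟩ := mem_powersetCard.1 hX
    obtain ⟨hYS, hY⟩ := mem_powersetCard.1 hY
    rw [mem_powersetCard_univ,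
      card_union_of_disjoint (subset_compl_iff_disjoint_right.1 hYS).symm, hY, ← hX,
      card_sdiff_add_card_eq_card hXS, S.2]
  have h_fiber (U : Omega N m) : B N m k U S = #{p ∈ exchanges | S.1 \ p.1 ∪ p.2 = U.1} := by
    simp only [B, exchanges, filter_filter, and_assoc]
  rw [← sum_finset_product' exchanges _ _ h_mem, ← sum_fiberwise_of_maps_to' h_maps,
    sum_subtype _ fun U => mem_powersetCard_univ]
  refine sum_congr rfl fun U _ => ?_
  rw [h_fiber, sum_const, nsmul_eq_mul, mul_comm]

lemma sum_mul_B_one (g : Finset (Fin N) → ℤ) (S : Omega N m) :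
    ∑ U : Omega N m, g U.1 * B N m 1 U S
      = ∑ x ∈ S.1, ∑ y ∈ (S.1.erase x)ᶜ, g (insert y (S.1.erase x)) := by
  simp only [sum_mul_B, powersetCard_one, sum_map, Function.Embedding.coeFn_mk,
    sdiff_singleton_eq_erase, union_singleton]

lemma B_mul_B_one (N m k : ℕ) :
    B N m k * B N m 1
      = ((k : ℤ) + 1) ^ 2 • B N m (k + 1) + ((k : ℤ) * (N - 2 * m + k + 1)) • B N m k := by
  ext T S
  have h_insert (x : Fin N) (hx : x ∈ S.1) :=
    sum_modifiedDeckEntry_insert m k (S := S.1.erase x) ((card_erase_add_one hx).trans S.2) T.2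
  simp only [Matrix.mul_apply, Matrix.add_apply, Matrix.smul_apply, smul_eq_mul, B_apply k,
    B_apply (k + 1), sum_mul_B_one fun U => modifiedDeckEntry m k #(T.1 ∩ U)]
  rw [sum_congr rfl h_insert, sum_add_distrib, ← mul_sum, ← mul_sum,
    sum_modifiedDeckEntry_erase m k S.2, sum_modifiedDeckEntry_erase m (k + 1) S.2,
    Fintype.card_fin]
  push_cast
  ring

end Matrices

section Polynomials

open Polynomial

/-- The polynomial whose value at `B_1` is `B_k`, in factored form so that its divisibility by `X`
for `k ≥ 1` can be read off the factor `j = 0`. -/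
noncomputable def modifiedDeckPoly (N m k : ℕ) : ℚ[X] :=
  C (((k.factorial : ℚ) ^ 2)⁻¹) * ∏ j ∈ range k, (X - C ((j : ℚ) * (N - 2 * m + j + 1)))

lemma coeff_zero_modifiedDeckPoly_succ (N m k : ℕ) :
    (modifiedDeckPoly N m (k + 1)).coeff 0 = 0 := by
  simp [modifiedDeckPoly, prod_range_succ', coeff_zero_eq_eval_zero]

lemma sq_smul_modifiedDeckPoly_succ (N m k : ℕ) :
    ((k : ℚ) + 1) ^ 2 • modifiedDeckPoly N m (k + 1)
      = modifiedDeckPoly N m k * (X - C ((k : ℚ) * (N - 2 * m + k + 1))) := by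
  have hk : (k : ℚ) + 1 ≠ 0 := by positivity
  rw [modifiedDeckPoly, modifiedDeckPoly, prod_range_succ, ← mul_assoc, ← smul_mul_assoc,
    ← smul_mul_assoc, smul_C, Nat.factorial_succ]
  have h_coeff : ((k : ℚ) + 1) ^ 2 • ((((k + 1) * k.factorial : ℕ) : ℚ) ^ 2)⁻¹
      = ((k.factorial : ℚ) ^ 2)⁻¹ := by
    rw [smul_eq_mul]
    push_cast
    field_simp
  rw [h_coeff]

lemma aeval_modifiedDeckPoly (N m k : ℕ) :
    aeval ((B N m 1).map (Int.cast : ℤ → ℚ)) (modifiedDeckPoly N m k)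
      = (B N m k).map (Int.cast : ℤ → ℚ) := by
  induction k with
  | zero => simp [modifiedDeckPoly, B_zero]
  | succ k ih =>
    have hk : ((k : ℚ) + 1) ^ 2 ≠ 0 := by positivity
    have h_rec := congrArg (Int.castRingHom ℚ).mapMatrix (B_mul_B_one N m k)
    simp only [map_mul, map_add, map_zsmul, ← Int.cast_smul_eq_zsmul ℚ, RingHom.mapMatrix_apply,
      Int.coe_castRingHom] at h_rec
    push_cast at h_rec
    refine (smul_right_inj hk).1 ?_
    rw [← map_smul, sq_smul_modifiedDeckPoly_succ, map_mul, map_sub, aeval_X, aeval_C, ih, mul_sub,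
      h_rec, ← Algebra.commutes, ← Algebra.smul_def, add_sub_cancel_right]

end Polynomials

/-- For every `k` there is a polynomial `p` over `ℚ` with zero constant coefficient
such that `J_k = p(B_1) + (−1)^k C(m,k) • I` as Ω × Ω matrices over `ℚ`. -/
theorem perturbed_in_terms_of_modified_one (N m : ℕ) (hm : m ≤ N) (k : ℕ) :
    ∃ p : Polynomial ℚ, p.coeff 0 = 0 ∧
      (J N m k).map (Int.cast : ℤ → ℚ)
        = Polynomial.aeval ((B N m 1).map (Int.cast : ℤ → ℚ)) p
          + ((-1 : ℚ) ^ k * (m.choose k : ℚ)) • (1 : Matrix (Omega N m) (Omega N m) ℚ) := by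
  refine ⟨∑ i ∈ range k, ((-1 : ℚ) ^ (k - (i + 1)) * (m - (i + 1)).choose (k - (i + 1)))
    • modifiedDeckPoly N m (i + 1), ?_, ?_⟩
  · simp [coeff_zero_modifiedDeckPoly_succ]
  · have h_inversion := congrArg (Int.castRingHom ℚ).mapMatrix (J_eq_sum_B N m k)
    rw [sum_range_succ', B_zero] at h_inversion
    simp only [map_sum, map_add, map_zsmul, ← Int.cast_smul_eq_zsmul ℚ, RingHom.mapMatrix_apply,
      Int.coe_castRingHom] at h_inversion
    simpa [aeval_modifiedDeckPoly] using h_inversion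
end

section
/- For every natural number i with i ≥ 1 there exists a polynomial q over ℚ with zero constant coefficient (q.coeff 0 = 0) such that, as Ω × Ω matrices over ℚ, B_i = q(B_1), where q(B_1) denotes the evaluation of q at the matrix B_1. (The modified i-deck operator is expressible in terms of the modified 1-deck operator, with no identity-operator term.) -/
/-!
Let `I(a, b)` be the inclusion matrix of `a`-subsets versus `b`-subsets. Sorting the pairs `(X, Y)`
counted by `B_k` by the surviving set `S \ X` gives `B_k = I(m - k, m)ᵀ I(m - k, m)`. As in the
representation theory of `sl₂`, moving a lowering operator past a raising operator costs a scalar: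

  `I(a + 1, b + 1) I(b, b + 1)ᵀ = I(a, a + 1)ᵀ I(a, b) + (N - (a + 1) - b) I(a + 1, b)`.

Since products of inclusion matrices are multiples of inclusion matrices, this yields
`B_k B_1 = (k + 1)² B_{k+1} + k (N - 2m + k + 1) B_k`, which expresses `B_{k+1}` through `B_k` and
`B_1` without ever introducing the identity matrix.
-/

open Finset

open scoped Nat Polynomial Matrix

/-- The inclusion matrix of `a`-element subsets versus `b`-element subsets of `α`: the entry at
`(W, S)` is `1` if `W ⊆ S` and `0` otherwise. It is the lowering operator from level `b` to level
`a` of the subset lattice; its transpose is the corresponding raising operator. -/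
def inclusionMatrix (α R : Type*) [DecidableEq α] [Zero R] [One R] (a b : ℕ) :
    Matrix {W : Finset α // #W = a} {S : Finset α // #S = b} R :=
  Matrix.of fun W S => if W.1 ⊆ S.1 then 1 else 0

section Counting

lemma sum_subtype_ite_eq_card {β R : Type*} [AddCommMonoidWithOne R] {p P : β → Prop}
    [Fintype (Subtype p)] [DecidablePred P] (s : Finset β) (hs : ∀ x, x ∈ s ↔ p x ∧ P x) :
    ∑ x : Subtype p, (if P x then (1 : R) else 0) = #s := by
  rw [sum_boole, ← card_map (Function.Embedding.subtype p)]
  congr 2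
  ext x
  simp [hs, and_comm]

variable {α : Type*} [DecidableEq α]

lemma card_powersetCard_inter_eq_card_filter_erase_subset {a : ℕ} {W : Finset α}
    (hW : #W = a + 1) (V : Finset α) :
    #(powersetCard a (W ∩ V)) = #{z ∈ W | W.erase z ⊆ V} := by
  rw [← card_image_of_injOn ((erase_injOn W).mono (filter_subset _ _))]
  congr 1
  ext U
  simp only [mem_powersetCard, subset_inter_iff, mem_image, mem_filter]
  constructor
  · rintro ⟨⟨hUW, hUV⟩, hU⟩
    obtain ⟨z, hz, rfl⟩ := exists_eq_insert_iff.mpr ⟨hUW, by rw [hU, hW]⟩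
    exact ⟨z, ⟨mem_insert_self z U, by rwa [erase_insert hz]⟩, erase_insert hz⟩
  · rintro ⟨z, ⟨hzW, hzV⟩, rfl⟩
    exact ⟨⟨erase_subset z W, hzV⟩, by rw [card_erase_of_mem hzW, hW, Nat.add_sub_cancel]⟩

variable [Fintype α]

lemma card_filter_union_subset_eq_card_filter_erase_subset {b : ℕ} {V : Finset α}
    (hV : #V = b) (W : Finset α) :
    #{S ∈ powersetCard (b + 1) univ | W ∪ V ⊆ S} = #{z ∈ Vᶜ | W.erase z ⊆ V} := by
  rw [← card_image_of_injOn ((insert_inj_on' V).mono (filter_subset _ _))]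
  congr 1
  ext S
  simp only [mem_filter, mem_powersetCard, subset_univ, true_and, union_subset_iff, mem_image,
    mem_compl, ← subset_insert_iff]
  constructor
  · rintro ⟨hS, hWS, hVS⟩
    obtain ⟨z, hz, rfl⟩ := exists_eq_insert_iff.mpr ⟨hVS, by rw [hV, hS]⟩
    exact ⟨z, ⟨hz, hWS⟩, rfl⟩
  · rintro ⟨z, ⟨hz, hW⟩, rfl⟩
    exact ⟨by rw [card_insert_of_notMem hz, hV], hW, subset_insert z V⟩

lemma card_filter_compl_erase_subset (W V : Finset α) :
    (#{z ∈ Vᶜ | W.erase z ⊆ V} : ℤ) =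
      #{z ∈ W | W.erase z ⊆ V} + if W ⊆ V then (Fintype.card α - #W - #V : ℤ) else 0 := by
  by_cases hWV : W ⊆ V
  · have herase (z : α) : W.erase z ⊆ V := (erase_subset z W).trans hWV
    have hcompl := card_add_card_compl V
    simp only [herase, filter_true, if_pos hWV]
    lia
  · have hfilter : {z ∈ Vᶜ | W.erase z ⊆ V} = {z ∈ W | W.erase z ⊆ V} := by
      ext z
      simp only [mem_filter, mem_compl, and_congr_left_iff]
      grind
    rw [hfilter, if_neg hWV, add_zero]

end Counting

section InclusionMatrix

variable {α R : Type*} [DecidableEq α] [Fintype α]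

theorem inclusionMatrix_mul_inclusionMatrix [NonAssocSemiring R] {a b : ℕ} (hab : a ≤ b) (c : ℕ) :
    inclusionMatrix α R a b * inclusionMatrix α R b c =
      ((c - a).choose (b - a) : R) • inclusionMatrix α R a c := by
  ext ⟨W, hW⟩ ⟨S, hS⟩
  simp only [inclusionMatrix, Matrix.mul_apply, Matrix.smul_apply, Matrix.of_apply, smul_eq_mul,
    ite_zero_mul_ite_zero, mul_one]
  rw [sum_subtype_ite_eq_card (P := fun V => W ⊆ V ∧ V ⊆ S) {V ∈ powersetCard b S | W ⊆ V}
    (by simp only [mem_filter, mem_powersetCard]; tauto)]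
  split_ifs with hWS
  · rw [card_filter_powersetCard_subset W S b hWS (hW.trans_le hab), hW, hS, mul_one]
  · rw [filter_eq_empty_iff.mpr fun V hV hWV => hWS (hWV.trans (mem_powersetCard.mp hV).1),
      card_empty, Nat.cast_zero, mul_zero]

lemma inclusionMatrix_succ_mul_inclusionMatrix [NonAssocSemiring R] (a c : ℕ) :
    inclusionMatrix α R a (a + 1) * inclusionMatrix α R (a + 1) c =
      ((c - a : ℕ) : R) • inclusionMatrix α R a c := by
  rw [inclusionMatrix_mul_inclusionMatrix (Nat.le_add_right a 1), Nat.add_sub_cancel_left,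
    Nat.choose_one_right]

lemma inclusionMatrix_mul_inclusionMatrix_succ [NonAssocSemiring R] {a b : ℕ} (hab : a ≤ b) :
    inclusionMatrix α R a b * inclusionMatrix α R b (b + 1) =
      ((b + 1 - a : ℕ) : R) • inclusionMatrix α R a (b + 1) := by
  rw [inclusionMatrix_mul_inclusionMatrix hab, Nat.sub_add_comm hab, Nat.choose_succ_self_right]

-- Both products count elements `z` with `W \ {z} ⊆ V`: on the left `z ∉ V` is added to `V`, on the
-- right `z ∈ W` is removed from `W`.
theorem inclusionMatrix_mul_transpose_inclusionMatrix [Ring R] (a b : ℕ) :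
    inclusionMatrix α R (a + 1) (b + 1) * (inclusionMatrix α R b (b + 1))ᵀ =
      (inclusionMatrix α R a (a + 1))ᵀ * inclusionMatrix α R a b +
        (Fintype.card α - (a + 1) - b : R) • inclusionMatrix α R (a + 1) b := by
  ext ⟨W, hW⟩ ⟨V, hV⟩
  simp only [inclusionMatrix, Matrix.mul_apply, Matrix.add_apply, Matrix.smul_apply,
    Matrix.transpose_apply, Matrix.of_apply, smul_eq_mul, ite_zero_mul_ite_zero, mul_one]
  rw [sum_subtype_ite_eq_card (P := fun S => W ⊆ S ∧ V ⊆ S)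
      {S ∈ powersetCard (b + 1) univ | W ∪ V ⊆ S} (by simp [union_subset_iff]),
    sum_subtype_ite_eq_card (P := fun U => U ⊆ W ∧ U ⊆ V) (powersetCard a (W ∩ V))
      (by simp [subset_inter_iff, and_comm]),
    card_filter_union_subset_eq_card_filter_erase_subset hV,
    card_powersetCard_inter_eq_card_filter_erase_subset hW]
  have hcount := congrArg (Int.cast : ℤ → R) (card_filter_compl_erase_subset W V)
  rw [hW, hV] at hcount
  push_cast at hcount
  rw [hcount, mul_ite, mul_one, mul_zero]

theorem inclusionMatrix_gram_mul_gram [CommRing R] (a : ℕ) {k : ℕ} (hk : 1 ≤ k) :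
    (inclusionMatrix α R (a + 1) (a + k + 1))ᵀ * inclusionMatrix α R (a + 1) (a + k + 1) *
        ((inclusionMatrix α R (a + k) (a + k + 1))ᵀ * inclusionMatrix α R (a + k) (a + k + 1)) =
      ((k + 1 : R) ^ 2) •
          ((inclusionMatrix α R a (a + k + 1))ᵀ * inclusionMatrix α R a (a + k + 1)) +
        (k * (Fintype.card α - (a + 1) - (a + k)) : R) •
          ((inclusionMatrix α R (a + 1) (a + k + 1))ᵀ *
            inclusionMatrix α R (a + 1) (a + k + 1)) := by
  set I := inclusionMatrix α R
  set c : R := Fintype.card α - (a + 1) - (a + k)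
  have hcomm : I (a + 1) (a + k + 1) * (I (a + k) (a + k + 1))ᵀ =
      (I a (a + 1))ᵀ * I a (a + k) + c • I (a + 1) (a + k) := by
    simpa using inclusionMatrix_mul_transpose_inclusionMatrix (α := α) (R := R) a (a + k)
  have hleft : I a (a + 1) * I (a + 1) (a + k + 1) = (k + 1 : R) • I a (a + k + 1) := by
    rw [inclusionMatrix_succ_mul_inclusionMatrix, show a + k + 1 - a = k + 1 by lia,
      Nat.cast_succ]
  have hright : I a (a + k) * I (a + k) (a + k + 1) = (k + 1 : R) • I a (a + k + 1) := by
    rw [inclusionMatrix_mul_inclusionMatrix_succ (by lia), show a + k + 1 - a = k + 1 by lia,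
      Nat.cast_succ]
  have hscalar : I (a + 1) (a + k) * I (a + k) (a + k + 1) = (k : R) • I (a + 1) (a + k + 1) := by
    rw [inclusionMatrix_mul_inclusionMatrix_succ (by lia), show a + k + 1 - (a + 1) = k by lia]
  calc
    _ = (I (a + 1) (a + k + 1))ᵀ * (I (a + 1) (a + k + 1) * (I (a + k) (a + k + 1))ᵀ) *
          I (a + k) (a + k + 1) := by simp only [Matrix.mul_assoc]
    _ = (I a (a + 1) * I (a + 1) (a + k + 1))ᵀ * (I a (a + k) * I (a + k) (a + k + 1)) +
          c • ((I (a + 1) (a + k + 1))ᵀ * (I (a + 1) (a + k) * I (a + k) (a + k + 1))) := by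
      simp only [hcomm, Matrix.add_mul, Matrix.mul_add, Matrix.smul_mul, Matrix.mul_smul,
        Matrix.transpose_mul, Matrix.mul_assoc]
    _ = _ := by
      simp only [hleft, hright, hscalar, Matrix.transpose_smul, Matrix.smul_mul, Matrix.mul_smul,
        smul_smul, sq, mul_comm c]

end InclusionMatrix

section ModifiedDeck

variable {N m k : ℕ}

lemma B_apply_eq_card_powersetCard {j : ℕ} (hjk : j + k = m) (T S : Omega N m) :
    B N m k T S = #(powersetCard j (T.1 ∩ S.1)) := by
  obtain ⟨T, hT⟩ := T
  obtain ⟨S, hS⟩ := S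
  rw [B, Nat.cast_inj]
  refine card_nbij' (fun p => S \ p.1) (fun W => (S \ W, T \ W)) ?_ ?_ ?_ ?_
  · rintro ⟨X, Y⟩ hXY
    obtain ⟨hX, hXk, -, -, rfl⟩ := (mem_filter.mp hXY).2
    have hcard : #(S \ X) = j := by rw [card_sdiff_of_subset hX, hS, hXk, ← hjk, Nat.add_sub_cancel]
    exact mem_powersetCard.mpr ⟨subset_inter subset_union_left sdiff_subset, hcard⟩
  · intro W hW
    obtain ⟨⟨hWT, hWS⟩, hW⟩ := by simpa [subset_inter_iff] using hW
    simp [card_sdiff_of_subset, hWT, hWS, hT, hS, hW, ← hjk]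
  · rintro ⟨X, Y⟩ hXY
    obtain ⟨hX, -, hY, -, rfl⟩ := (mem_filter.mp hXY).2
    exact Prod.ext (Finset.sdiff_sdiff_eq_self hX)
      (union_sdiff_cancel_left (disjoint_iff_inter_eq_empty.mpr hY).symm)
  · intro W hW
    exact Finset.sdiff_sdiff_eq_self ((mem_powersetCard.mp hW).1.trans inter_subset_right)

theorem map_B_eq_transpose_mul_inclusionMatrix {R : Type*} [Ring R] {j : ℕ} (hjk : j + k = m) :
    (B N m k).map (Int.cast : ℤ → R) =
      (inclusionMatrix (Fin N) R j m)ᵀ * inclusionMatrix (Fin N) R j m := by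
  ext T S
  rw [Matrix.map_apply, B_apply_eq_card_powersetCard hjk, Int.cast_natCast]
  simp only [inclusionMatrix, Matrix.mul_apply, Matrix.transpose_apply, Matrix.of_apply,
    ite_zero_mul_ite_zero, mul_one]
  exact (sum_subtype_ite_eq_card (P := fun W => W ⊆ T.1 ∧ W ⊆ S.1) _
    (by simp [subset_inter_iff, and_comm])).symm

theorem B_eq_zero_of_lt (hmk : m < k) : B N m k = 0 := by
  ext T S
  rw [B, Matrix.zero_apply, Nat.cast_eq_zero, card_eq_zero, filter_eq_empty_iff]
  rintro ⟨X, Y⟩ - ⟨hX, hXk, -⟩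
  exact (card_le_card hX).not_gt (by rwa [hXk, S.2])

theorem map_B_mul_map_B_one {R : Type*} [CommRing R] (hk : 1 ≤ k) (hkm : k < m) :
    (B N m k).map (Int.cast : ℤ → R) * (B N m 1).map (Int.cast : ℤ → R) =
      ((k + 1 : R) ^ 2) • (B N m (k + 1)).map (Int.cast : ℤ → R) +
        (k * (N - 2 * m + k + 1) : R) • (B N m k).map (Int.cast : ℤ → R) := by
  obtain ⟨a, rfl⟩ : ∃ a, m = a + k + 1 := ⟨m - k - 1, by lia⟩
  rw [map_B_eq_transpose_mul_inclusionMatrix (show a + 1 + k = a + k + 1 by lia),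
    map_B_eq_transpose_mul_inclusionMatrix (show a + k + 1 = a + k + 1 from rfl),
    map_B_eq_transpose_mul_inclusionMatrix (show a + (k + 1) = a + k + 1 from rfl),
    inclusionMatrix_gram_mul_gram a hk, Fintype.card_fin]
  push_cast
  congr 2
  ring

theorem map_B_mem_adjoin_map_B_one {R : Type*} [CommRing R] (hk : 1 ≤ k)
    (hunit : IsUnit (k ! : R)) :
    (B N m k).map (Int.cast : ℤ → R) ∈
      NonUnitalAlgebra.adjoin R {(B N m 1).map (Int.cast : ℤ → R)} := by
  set A := NonUnitalAlgebra.adjoin R {(B N m 1).map (Int.cast : ℤ → R)}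
  have hone : (B N m 1).map (Int.cast : ℤ → R) ∈ A :=
    NonUnitalAlgebra.self_mem_adjoin_singleton R _
  induction k, hk using Nat.le_induction with
  | base => exact hone
  | succ k hk ih =>
    rw [Nat.factorial_succ, Nat.cast_mul, IsUnit.mul_iff, Nat.cast_succ] at hunit
    rcases lt_or_ge k m with hkm | hmk
    · have hmem := ih hunit.2
      refine (A.toSubmodule.smul_mem_iff_of_isUnit (hunit.1.pow 2)).mp ?_
      simpa [map_B_mul_map_B_one hk hkm] using
        sub_mem (mul_mem hmem hone) (SMulMemClass.smul_mem (k * (N - 2 * m + k + 1) : R) hmem)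
    · rw [B_eq_zero_of_lt (Nat.lt_succ_of_le hmk), Matrix.map_zero _ Int.cast_zero]
      exact zero_mem A

end ModifiedDeck

theorem exists_coeff_zero_eq_zero_and_eq_aeval_of_mem_adjoin {R A : Type*} [CommSemiring R]
    [Semiring A] [Algebra R A] {x y : A} (hy : y ∈ NonUnitalAlgebra.adjoin R {x}) :
    ∃ q : R[X], q.coeff 0 = 0 ∧ y = Polynomial.aeval x q := by
  induction hy using NonUnitalAlgebra.adjoin_induction with
  | mem z hz => exact ⟨Polynomial.X, by simp, by simpa using hz⟩
  | zero => exact ⟨0, by simp, by simp⟩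
  | add _ _ _ _ hp hq =>
    obtain ⟨⟨p, hp, rfl⟩, q, hq, rfl⟩ := hp, hq
    exact ⟨p + q, by simp [hp, hq], by simp⟩
  | mul _ _ _ _ hp hq =>
    obtain ⟨⟨p, hp, rfl⟩, q, -, rfl⟩ := hp, hq
    exact ⟨p * q, by simp [hp], by simp⟩
  | smul r _ _ hp =>
    obtain ⟨p, hp, rfl⟩ := hp
    exact ⟨r • p, by simp [hp], by simp⟩

theorem modified_in_terms_of_modified_one_general {R : Type*} [CommRing R] (N m i : ℕ)
    (hi : 1 ≤ i) (hunit : IsUnit (i ! : R)) :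
    ∃ q : R[X], q.coeff 0 = 0 ∧
      (B N m i).map (Int.cast : ℤ → R) =
        Polynomial.aeval ((B N m 1).map (Int.cast : ℤ → R)) q :=
  exists_coeff_zero_eq_zero_and_eq_aeval_of_mem_adjoin (map_B_mem_adjoin_map_B_one hi hunit)

/-- For every `i ≥ 1` there is a polynomial `q` over `ℚ` with zero constant coefficient
such that `B_i = q(B_1)` as Ω × Ω matrices over `ℚ`: the modified `i`-deck operator is
expressible in terms of the modified `1`-deck operator with no identity term. -/
theorem modified_in_terms_of_modified_one (N m : ℕ) (hm : m ≤ N) (i : ℕ) (hi : 1 ≤ i) :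
    ∃ q : Polynomial ℚ, q.coeff 0 = 0 ∧
      (B N m i).map (Int.cast : ℤ → ℚ)
        = Polynomial.aeval ((B N m 1).map (Int.cast : ℤ → ℚ)) q :=
  modified_in_terms_of_modified_one_general N m i hi
    (isUnit_iff_ne_zero.mpr (Nat.cast_ne_zero.mpr i.factorial_ne_zero))
end

section
/- Let P and Q be multisets of simple graphs on Fin n in which every member has exactly m edges. If the modified 1-decks of P and Q agree up to isomorphism (i.e. the multiset unions of MD_1 over the members of P and of Q have equal images under the quotient map to isomorphism classes), then for every natural number k ≥ 1 the modified k-decks of P and Q also agree up to isomorphism. -/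
/-!
Identify a graph with its edge set, a subset of the set `T` of all `N = C(n, 2)` pairs. The modified
`k`-deck then removes `k` elements and adds `k` elements of `T`. Up to multiplicities, removing or
adding `k` elements is an iterate of removing or adding a single one, and adding commutes with
removing one element up to a scalar, as for the raising and lowering operators of `sl₂`. For a graph
with `m` edges this gives

  `MD_k ∘ MD_1 + 2 k m • MD_k = (k + 1) ^ 2 • MD_{k+1} + k (N + k + 1) • MD_k`.

Members of `MD_k G` have as many edges as `G`, so the left side is the effect on `MD_k` of an
operation commuting with isomorphisms, namely the augmented deck `G ↦ MD_1 G + 2 k |E(G)| • {G}`.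
Hence the isomorphism classes in `MD_k` determine those in `MD_{k+1}`, after cancelling
`(k + 1) ^ 2`.
-/

open Finset

noncomputable section
open scoped Classical

theorem nsmul_bind {β γ : Type*} (c : ℕ) (s : Multiset β) (f : β → Multiset γ) :
    (c • s).bind f = c • s.bind f := by
  simp only [Multiset.bind, Multiset.join, Multiset.map_nsmul, Multiset.sum_nsmul]

theorem bind_nsmul {β γ : Type*} (c : ℕ) (s : Multiset β) (f : β → Multiset γ) :
    (s.bind fun b => c • f b) = c • s.bind f := Multiset.sum_map_nsmul

section

variable {α M : Type*} [DecidableEq α] [AddCommMonoid M]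

theorem sum_powersetCard_sum_sdiff (F : α → Finset α → M) (S : Finset α) (k : ℕ) :
    ∑ X ∈ S.powersetCard k, ∑ e ∈ S \ X, F e (insert e X) =
      ∑ Z ∈ S.powersetCard (k + 1), ∑ e ∈ Z, F e Z := by
  rw [sum_sigma', sum_sigma']
  refine sum_bij' (fun p _ => ⟨insert p.2 p.1, p.2⟩) (fun p _ => ⟨p.1.erase p.2, p.2⟩)
    ?_ ?_ ?_ ?_ ?_
  all_goals
    rintro ⟨X, e⟩ h
    simp only [mem_sigma, mem_powersetCard, mem_sdiff] at h ⊢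
  · obtain ⟨⟨hXS, hX⟩, heS, heX⟩ := h
    exact ⟨⟨insert_subset heS hXS, by rw [card_insert_of_notMem heX, hX]⟩, mem_insert_self e X⟩
  · obtain ⟨⟨hXS, hX⟩, heX⟩ := h
    exact ⟨⟨(erase_subset e X).trans hXS, by rw [card_erase_of_mem heX, hX, Nat.add_sub_cancel]⟩,
      hXS heX, notMem_erase e X⟩
  · rw [erase_insert h.2.2]
  · rw [insert_erase h.2]

theorem sum_powersetCard_sum_insert (g : Finset α → M) (S : Finset α) (k : ℕ) :
    ∑ X ∈ S.powersetCard k, ∑ e ∈ S \ X, g (insert e X) =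
      (k + 1) • ∑ Z ∈ S.powersetCard (k + 1), g Z := by
  rw [sum_powersetCard_sum_sdiff (fun _ => g), smul_sum]
  refine sum_congr rfl fun Z hZ => ?_
  rw [sum_const, (mem_powersetCard.1 hZ).2]

theorem sum_powersetCard_sum_erase (g : Finset α → M) (S : Finset α) (k : ℕ) :
    ∑ Z ∈ S.powersetCard (k + 1), ∑ e ∈ Z, g (Z.erase e) + k • ∑ X ∈ S.powersetCard k, g X =
      #S • ∑ X ∈ S.powersetCard k, g X := by
  rw [← sum_powersetCard_sum_sdiff (fun e Z => g (Z.erase e)), smul_sum, smul_sum,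
    ← sum_add_distrib]
  refine sum_congr rfl fun X hX => ?_
  obtain ⟨hXS, hXk⟩ := mem_powersetCard.1 hX
  have erase_eq : ∀ e ∈ S \ X, g ((insert e X).erase e) = g X := fun e he => by
    rw [erase_insert (mem_sdiff.1 he).2]
  rw [sum_congr rfl erase_eq, sum_const, ← add_nsmul, ← hXk, card_sdiff_add_card_eq_card hXS]

theorem sum_powersetCard_succ_insert (g : Finset α → M) {S : Finset α} {e : α} (he : e ∉ S)
    (k : ℕ) :
    ∑ Z ∈ (insert e S).powersetCard (k + 1), g Z =
      ∑ Z ∈ S.powersetCard (k + 1), g Z + ∑ X ∈ S.powersetCard k, g (insert e X) := by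
  have notMem : ∀ {j : ℕ} {X : Finset α}, X ∈ S.powersetCard j → e ∉ X := fun hX heX =>
    he ((mem_powersetCard.1 hX).1 heX)
  rw [powersetCard_succ_insert he, sum_union, sum_image]
  · intro X hX Y hY h
    rw [← erase_insert (notMem hX), h, erase_insert (notMem hY)]
  · rw [disjoint_left]
    rintro _ hZ hZ'
    obtain ⟨X, -, rfl⟩ := mem_image.1 hZ'
    exact notMem hZ (mem_insert_self e X)

end

section

variable {α : Type*} [DecidableEq α]

/-- The sets obtained from `A` by removing `k` of its elements: the `k`-th down operator of the
lattice of finite sets, with values in multisets so that it composes through `Multiset.bind`. -/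
def removals (k : ℕ) (A : Finset α) : Multiset (Finset α) :=
  (A.powersetCard k).val.map fun X => A \ X

/-- The sets obtained from `A` by adding `k` elements of the ground set `T`: the `k`-th up operator
of the lattice of subsets of `T`. -/
def additions (T : Finset α) (k : ℕ) (A : Finset α) : Multiset (Finset α) :=
  ((T \ A).powersetCard k).val.map fun Y => A ∪ Y

/-- The set-theoretic modified `k`-deck: `k` elements of `A` are removed, and then `k` elements of
the ground set `T` are added, possibly some of those just removed. -/
def exchanges (T : Finset α) (k : ℕ) (A : Finset α) : Multiset (Finset α) :=
  (removals k A).bind (additions T k)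

theorem mem_removals {k : ℕ} {A B : Finset α} : B ∈ removals k A ↔ B ⊆ A ∧ #B + k = #A := by
  simp only [removals, Multiset.mem_map, mem_val, mem_powersetCard]
  constructor
  · rintro ⟨X, ⟨hXA, rfl⟩, rfl⟩
    exact ⟨sdiff_subset, card_sdiff_add_card_eq_card hXA⟩
  · rintro ⟨hBA, hcard⟩
    exact ⟨A \ B, ⟨sdiff_subset, by rw [card_sdiff_of_subset hBA]; lia⟩,
      Finset.sdiff_sdiff_eq_self hBA⟩

theorem mem_exchanges {T : Finset α} {k : ℕ} {A C : Finset α} (hA : A ⊆ T)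
    (hC : C ∈ exchanges T k A) : C ⊆ T ∧ #C = #A := by
  obtain ⟨B, hB, hC⟩ := Multiset.mem_bind.1 hC
  obtain ⟨Y, hY, rfl⟩ := Multiset.mem_map.1 hC
  obtain ⟨hBA, hcard⟩ := mem_removals.1 hB
  obtain ⟨hYT, rfl⟩ := mem_powersetCard.1 (mem_def.2 hY)
  exact ⟨union_subset (hBA.trans hA) (hYT.trans sdiff_subset),
    by rw [card_union_of_disjoint (disjoint_sdiff.mono_right hYT), hcard]⟩

theorem removals_bind {β : Type*} (k : ℕ) (A : Finset α) (g : Finset α → Multiset β) :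
    (removals k A).bind g = ∑ X ∈ A.powersetCard k, g (A \ X) :=
  Multiset.bind_map _ _ _

theorem additions_bind {β : Type*} (T : Finset α) (k : ℕ) (A : Finset α)
    (g : Finset α → Multiset β) :
    (additions T k A).bind g = ∑ Y ∈ (T \ A).powersetCard k, g (A ∪ Y) :=
  Multiset.bind_map _ _ _

theorem removals_eq_sum (k : ℕ) (A : Finset α) :
    removals k A = ∑ X ∈ A.powersetCard k, {A \ X} := (Multiset.bind_singleton _ _).symm

theorem additions_eq_sum (T : Finset α) (k : ℕ) (A : Finset α) :
    additions T k A = ∑ Y ∈ (T \ A).powersetCard k, {A ∪ Y} := (Multiset.bind_singleton _ _).symm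

theorem additions_one (T A : Finset α) : additions T 1 A = ∑ f ∈ T \ A, {insert f A} := by
  rw [additions_eq_sum, powersetCard_one, sum_map]
  exact sum_congr rfl fun f _ => by rw [Function.Embedding.coeFn_mk, union_singleton]

theorem removals_one_bind {β : Type*} (A : Finset α) (g : Finset α → Multiset β) :
    (removals 1 A).bind g = ∑ e ∈ A, g (A.erase e) := by
  rw [removals_bind, powersetCard_one, sum_map]
  exact sum_congr rfl fun e _ => by rw [Function.Embedding.coeFn_mk, sdiff_singleton_eq_erase]

theorem removals_one (A : Finset α) : removals 1 A = ∑ e ∈ A, {A.erase e} := by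
  rw [← removals_one_bind A singleton, Multiset.bind_singleton, Multiset.map_id']

theorem removals_bind_removals_one (k : ℕ) (A : Finset α) :
    (removals k A).bind (removals 1) = (k + 1) • removals (k + 1) A := by
  rw [removals_bind, removals_eq_sum, ← sum_powersetCard_sum_insert]
  refine sum_congr rfl fun X _ => ?_
  rw [removals_one]
  exact sum_congr rfl fun e _ => by rw [sdiff_insert]

theorem additions_bind_additions_one (T : Finset α) (k : ℕ) (A : Finset α) :
    (additions T k A).bind (additions T 1) = (k + 1) • additions T (k + 1) A := by
  rw [additions_bind, additions_eq_sum, ← sum_powersetCard_sum_insert]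
  refine sum_congr rfl fun Y _ => ?_
  rw [additions_one, ← sup_eq_union, ← sdiff_sdiff]
  exact sum_congr rfl fun f _ => by rw [union_insert, sup_eq_union]

theorem additions_succ_bind_removals_one (T : Finset α) (k : ℕ) (A : Finset α) :
    (additions T (k + 1) A).bind (removals 1) + k • additions T k A =
      ∑ e ∈ A, ∑ Y ∈ (T \ A).powersetCard (k + 1), {A.erase e ∪ Y} +
        #(T \ A) • additions T k A := by
  have sum_union_erase : ∀ Y ∈ (T \ A).powersetCard (k + 1),
      removals 1 (A ∪ Y) = ∑ e ∈ A, {A.erase e ∪ Y} + ∑ e ∈ Y, {A ∪ Y.erase e} := by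
    intro Y hY
    have hAY : Disjoint A Y := disjoint_sdiff.mono_right (mem_powersetCard.1 hY).1
    rw [removals_one, sum_union hAY]
    congr 1 <;> refine sum_congr rfl fun e he => ?_
    · rw [erase_union_distrib, erase_eq_of_notMem (disjoint_left.1 hAY he)]
    · rw [erase_union_distrib, erase_eq_of_notMem (disjoint_right.1 hAY he)]
  rw [additions_bind, sum_congr rfl sum_union_erase, sum_add_distrib, add_assoc, additions_eq_sum,
    sum_powersetCard_sum_erase (fun Y => {A ∪ Y}), sum_comm]

theorem removals_one_bind_additions_succ {T A : Finset α} (hA : A ⊆ T) (k : ℕ) :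
    (removals 1 A).bind (additions T (k + 1)) =
      ∑ e ∈ A, ∑ Y ∈ (T \ A).powersetCard (k + 1), {A.erase e ∪ Y} + #A • additions T k A := by
  rw [removals_one_bind, ← sum_const, ← sum_add_distrib]
  refine sum_congr rfl fun e he => ?_
  have he' : e ∉ T \ A := fun h => (mem_sdiff.1 h).2 he
  rw [additions_eq_sum, additions_eq_sum, sdiff_erase (hA he), sum_powersetCard_succ_insert _ he']
  congr 1
  refine sum_congr rfl fun Y _ => ?_
  rw [union_insert, ← insert_union, insert_erase he]

/-- The relation `[D, U_{k+1}] = (|T \ A| - |A| - k) U_k` between the down operator `D` and the up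
operators `U_k`, with both sides moved so that no subtraction occurs. -/
theorem additions_removals_one_commutator {T A : Finset α} (hA : A ⊆ T) (k : ℕ) :
    (additions T (k + 1) A).bind (removals 1) + (#A + k) • additions T k A =
      (removals 1 A).bind (additions T (k + 1)) + #(T \ A) • additions T k A := by
  rw [add_comm #A, add_nsmul, ← add_assoc, additions_succ_bind_removals_one,
    removals_one_bind_additions_succ hA, add_right_comm]

theorem additions_succ_bind_exchanges_one {T A : Finset α} (hA : A ⊆ T) (k : ℕ) :
    (additions T (k + 1) A).bind (exchanges T 1) +
        ((#A + k) * (k + 1)) • additions T (k + 1) A =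
      (k + 2) • (removals 1 A).bind (additions T (k + 2)) +
        (#(T \ A) * (k + 1)) • additions T (k + 1) A := by
  have h := congrArg (Multiset.bind · (additions T 1)) (additions_removals_one_commutator hA k)
  simp only [Multiset.add_bind, nsmul_bind, Multiset.bind_assoc, additions_bind_additions_one,
    bind_nsmul, ← mul_nsmul'] at h
  exact h

theorem exchanges_succ_bind_exchanges_one {T A : Finset α} (hA : A ⊆ T) (k : ℕ) :
    (exchanges T (k + 1) A).bind (exchanges T 1) +
        (2 * (k + 1) * #A) • exchanges T (k + 1) A =
      (k + 2) ^ 2 • exchanges T (k + 2) A +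
        ((k + 1) * (#T + k + 2)) • exchanges T (k + 1) A := by
  have at_removal : ∀ B ∈ removals (k + 1) A,
      (additions T (k + 1) B).bind (exchanges T 1) +
          (2 * (k + 1) * #A) • additions T (k + 1) B =
        (k + 2) • (removals 1 B).bind (additions T (k + 2)) +
          ((k + 1) * (#T + k + 2)) • additions T (k + 1) B := by
    intro B hB
    obtain ⟨hBA, hcard⟩ := mem_removals.1 hB
    have hcompl : #(T \ B) + #B = #T := card_sdiff_add_card_eq_card (hBA.trans hA)
    have hleft : 2 * (k + 1) * #A = (#B + k) * (k + 1) + (#A + 1) * (k + 1) := by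
      rw [← hcard]; ring
    have hright : (k + 1) * (#T + k + 2) = #(T \ B) * (k + 1) + (#A + 1) * (k + 1) := by
      rw [← hcard, ← hcompl]; ring
    rw [hleft, hright, add_nsmul _ (_ * _), add_nsmul _ (_ * _), ← add_assoc, ← add_assoc,
      additions_succ_bind_exchanges_one (hBA.trans hA)]
  have h := Multiset.bind_congr at_removal
  simp only [Multiset.bind_add, bind_nsmul, ← Multiset.bind_assoc, removals_bind_removals_one,
    nsmul_bind, ← mul_nsmul'] at h
  rw [pow_two]
  exact h

theorem exchanges_map {β : Type*} [DecidableEq β] (τ : α ↪ β) (T : Finset α) (k : ℕ)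
    (A : Finset α) :
    exchanges (T.map τ) k (A.map τ) = (exchanges T k A).map (Finset.map τ) := by
  simp only [exchanges, removals, additions, Multiset.map_bind, Multiset.bind_map,
    Multiset.map_map, powersetCard_map, map_val, RelEmbedding.coe_toEmbedding, mapEmbedding_apply,
    ← Finset.map_sdiff, map_union, Function.comp_def]

end

section

variable {V W : Type*}

/-- The graph with a prescribed finite edge set; diagonal pairs are ignored, so `E` is recovered
only when it consists of edges of the complete graph. -/
def ofEdgeFinset (E : Finset (Sym2 V)) : SimpleGraph V :=
  SimpleGraph.fromEdgeSet (E : Set (Sym2 V))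

theorem edgeFinset_subset_top (G : SimpleGraph V) [Fintype G.edgeSet]
    [Fintype (⊤ : SimpleGraph V).edgeSet] : G.edgeFinset ⊆ (⊤ : SimpleGraph V).edgeFinset :=
  SimpleGraph.edgeFinset_mono le_top

theorem edgeFinset_ofEdgeFinset {E : Finset (Sym2 V)} [Fintype (⊤ : SimpleGraph V).edgeSet]
    [Fintype (ofEdgeFinset E).edgeSet] (hE : E ⊆ (⊤ : SimpleGraph V).edgeFinset) :
    (ofEdgeFinset E).edgeFinset = E := by
  rw [← coe_subset, SimpleGraph.coe_edgeFinset, SimpleGraph.edgeSet_top,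
    Set.subset_compl_iff_disjoint_right] at hE
  rw [← coe_inj, SimpleGraph.coe_edgeFinset, ofEdgeFinset, SimpleGraph.edgeSet_fromEdgeSet]
  exact sdiff_eq_left.2 hE

theorem ofEdgeFinset_map (σ : V ≃ W) (E : Finset (Sym2 V)) :
    ofEdgeFinset (E.map σ.toEmbedding.sym2Map) = (ofEdgeFinset E).map σ := by
  ext a b
  obtain ⟨a, rfl⟩ := σ.surjective a
  obtain ⟨b, rfl⟩ := σ.surjective b
  have hmem : s(σ a, σ b) ∈ E.map σ.toEmbedding.sym2Map ↔ s(a, b) ∈ E :=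
    mem_map' (a := s(a, b)) σ.toEmbedding.sym2Map
  refine Iff.trans ?_ (SimpleGraph.map_adj_apply (f := σ.toEmbedding)).symm
  simp only [ofEdgeFinset, SimpleGraph.fromEdgeSet_adj, mem_coe, hmem, ne_eq,
    EmbeddingLike.apply_eq_iff_eq]

theorem map_eq_of_iso {G : SimpleGraph V} {H : SimpleGraph W} (σ : G ≃g H) : G.map σ = H := by
  ext a b
  obtain ⟨a, rfl⟩ := σ.surjective a
  obtain ⟨b, rfl⟩ := σ.surjective b
  rw [SimpleGraph.Iso.map_adj_iff]
  exact SimpleGraph.map_adj_apply (f := σ.toEquiv.toEmbedding)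

theorem edgeFinset_map_equiv (σ : V ≃ W) (G : SimpleGraph V) [Fintype G.edgeSet]
    [Fintype (G.map σ).edgeSet] :
    (G.map σ).edgeFinset = G.edgeFinset.map σ.toEmbedding.sym2Map := by
  rw [← coe_inj, coe_map, SimpleGraph.coe_edgeFinset, SimpleGraph.coe_edgeFinset]
  exact SimpleGraph.edgeSet_map σ.toEmbedding G

theorem edgeFinset_compl_deleteEdges [DecidableEq V] [Fintype (⊤ : SimpleGraph V).edgeSet]
    (G : SimpleGraph V) [Fintype G.edgeSet] (X : Finset (Sym2 V))
    [Fintype (G.deleteEdges (X : Set (Sym2 V)))ᶜ.edgeSet] :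
    (G.deleteEdges (X : Set (Sym2 V)))ᶜ.edgeFinset =
      (⊤ : SimpleGraph V).edgeFinset \ (G.edgeFinset \ X) := by
  simp only [← coe_inj, coe_sdiff, SimpleGraph.coe_edgeFinset, ← top_sdiff,
    SimpleGraph.edgeSet_sdiff, SimpleGraph.edgeSet_deleteEdges]

end

section

variable {n : ℕ}

theorem MD_eq_map_exchanges (k : ℕ) (G : SimpleGraph (Fin n)) :
    MD k G = (exchanges (⊤ : SimpleGraph (Fin n)).edgeFinset k G.edgeFinset).map ofEdgeFinset := by
  simp only [MD, exchanges, removals, additions, Multiset.map_bind, Multiset.bind_map,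
    Multiset.map_map, edgeFinset_compl_deleteEdges]
  rfl

/-- The modified `1`-deck of `G` together with `c` copies of `G` for each edge of `G`. The extra
copies carry the part of the deck recursion that depends on the number of edges. -/
def augmentedDeck (c : ℕ) (G : SimpleGraph (Fin n)) : Multiset (SimpleGraph (Fin n)) :=
  MD 1 G + (c * #G.edgeFinset) • {G}

theorem MD_succ_bind_augmentedDeck (k : ℕ) (G : SimpleGraph (Fin n)) :
    (MD (k + 1) G).bind (augmentedDeck (2 * (k + 1))) =
      (k + 2) ^ 2 • MD (k + 2) G +
        ((k + 1) * (#(⊤ : SimpleGraph (Fin n)).edgeFinset + k + 2)) • MD (k + 1) G := by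
  set T := (⊤ : SimpleGraph (Fin n)).edgeFinset
  have augmentedDeck_eq : ∀ E ∈ exchanges T (k + 1) G.edgeFinset,
      augmentedDeck (2 * (k + 1)) (ofEdgeFinset E) =
        (exchanges T 1 E).map ofEdgeFinset +
          (2 * (k + 1) * #G.edgeFinset) • {ofEdgeFinset E} := by
    intro E hE
    obtain ⟨hET, hcard⟩ := mem_exchanges (edgeFinset_subset_top G) hE
    rw [augmentedDeck, MD_eq_map_exchanges, edgeFinset_ofEdgeFinset hET, hcard]
  simp only [MD_eq_map_exchanges, ← Multiset.map_nsmul, ← Multiset.map_add]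
  rw [Multiset.bind_map, Multiset.bind_congr augmentedDeck_eq, Multiset.bind_add, bind_nsmul,
    Multiset.bind_singleton, ← Multiset.map_bind, ← Multiset.map_nsmul, ← Multiset.map_add,
    exchanges_succ_bind_exchanges_one (edgeFinset_subset_top G)]

theorem MD_map (σ : Equiv.Perm (Fin n)) (k : ℕ) (G : SimpleGraph (Fin n)) :
    MD k (G.map σ) = (MD k G).map (SimpleGraph.map σ) := by
  have top_map : (⊤ : SimpleGraph (Fin n)).edgeFinset =
      (⊤ : SimpleGraph (Fin n)).edgeFinset.map σ.toEmbedding.sym2Map := by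
    rw [← edgeFinset_map_equiv]
    exact SimpleGraph.edgeFinset_inj.2 (map_eq_of_iso (SimpleGraph.Iso.completeGraph σ)).symm
  rw [MD_eq_map_exchanges, MD_eq_map_exchanges, edgeFinset_map_equiv σ, top_map, exchanges_map,
    ← top_map, Multiset.map_map, Multiset.map_map]
  simp only [Function.comp_def, ofEdgeFinset_map]

theorem isoClass_map (σ : Equiv.Perm (Fin n)) (G : SimpleGraph (Fin n)) :
    isoClass (G.map σ) = isoClass G :=
  Quotient.sound (s := isoSetoid n) ⟨(SimpleGraph.Iso.map σ G).symm⟩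

theorem map_isoClass_augmentedDeck_map (σ : Equiv.Perm (Fin n)) (c : ℕ) (G : SimpleGraph (Fin n)) :
    (augmentedDeck c (G.map σ)).map isoClass = (augmentedDeck c G).map isoClass := by
  simp only [augmentedDeck, MD_map, Multiset.map_add, Multiset.map_nsmul, Multiset.map_singleton,
    Multiset.map_map, Function.comp_def, isoClass_map, edgeFinset_map_equiv, card_map]

theorem bind_eq_of_map_isoClass_eq {β : Type*} {f : SimpleGraph (Fin n) → Multiset β}
    (hf : ∀ (σ : Equiv.Perm (Fin n)) (G : SimpleGraph (Fin n)), f (G.map σ) = f G)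
    {P Q : Multiset (SimpleGraph (Fin n))}
    (h : P.map isoClass = Q.map isoClass) : P.bind f = Q.bind f := by
  have hf_iso : ∀ G H : SimpleGraph (Fin n), Nonempty (G ≃g H) → f G = f H := by
    rintro G H ⟨σ⟩
    rw [← map_eq_of_iso σ]
    exact (hf σ.toEquiv G).symm
  have bind_lift : ∀ R : Multiset (SimpleGraph (Fin n)),
      R.bind f = (R.map isoClass).bind (Quotient.lift (s := isoSetoid n) f hf_iso) := fun R =>
    (Multiset.bind_map R (Quotient.lift (s := isoSetoid n) f hf_iso) isoClass).symm
  rw [bind_lift, bind_lift, h]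

theorem bind_MD_succ_bind_augmentedDeck (P : Multiset (SimpleGraph (Fin n))) (k : ℕ) :
    (P.bind (MD (k + 1))).bind (augmentedDeck (2 * (k + 1))) =
      (k + 2) ^ 2 • P.bind (MD (k + 2)) +
        ((k + 1) * (#(⊤ : SimpleGraph (Fin n)).edgeFinset + k + 2)) • P.bind (MD (k + 1)) := by
  simp only [Multiset.bind_assoc, MD_succ_bind_augmentedDeck, Multiset.bind_add, bind_nsmul]

theorem modified_decks_determined_by_modified_one_deck_general (n : ℕ)
    (P Q : Multiset (SimpleGraph (Fin n)))
    (h : (P.bind (MD 1)).map isoClass = (Q.bind (MD 1)).map isoClass)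
    (k : ℕ) (hk : 1 ≤ k) :
    (P.bind (MD k)).map isoClass = (Q.bind (MD k)).map isoClass := by
  obtain ⟨k, rfl⟩ := Nat.exists_eq_add_of_le' hk
  clear hk
  induction k with
  | zero => exact h
  | succ k ih =>
    have augmented := bind_eq_of_map_isoClass_eq
      (f := fun G => (augmentedDeck (2 * (k + 1)) G).map isoClass)
      (fun σ G => map_isoClass_augmentedDeck_map σ _ G) ih
    simp only [← Multiset.map_bind, bind_MD_succ_bind_augmentedDeck, Multiset.map_add,
      Multiset.map_nsmul, ih] at augmented
    exact nsmul_right_injective (by positivity) (add_right_cancel augmented)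

end

/-- If the modified `1`-decks of two collections of `m`-edge graphs agree up to
isomorphism, then so do their modified `k`-decks for every `k ≥ 1`. -/
theorem modified_decks_determined_by_modified_one_deck (n m : ℕ)
    (P Q : Multiset (SimpleGraph (Fin n)))
    (hP : ∀ G ∈ P, G.edgeFinset.card = m) (hQ : ∀ G ∈ Q, G.edgeFinset.card = m)
    (h : (P.bind (MD 1)).map isoClass = (Q.bind (MD 1)).map isoClass)
    (k : ℕ) (hk : 1 ≤ k) :
    (P.bind (MD k)).map isoClass = (Q.bind (MD k)).map isoClass :=
  modified_decks_determined_by_modified_one_deck_general n P Q h k hk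

end
end

section
/- (Lovász's result for collections, edge-deck form.) Let N = C(n,2) and suppose 2m > N. Let P and Q be multisets of simple graphs on Fin n in which every member has exactly m edges. If the 1-edge decks of P and Q agree up to isomorphism (i.e. the multiset unions of ED_1 over the members of P and of Q have equal images under the quotient map to isomorphism classes), then P and Q are equal up to isomorphism (the multisets of isomorphism classes of the members of P and of Q coincide). -/
/-!
Lovász's inclusion–exclusion argument, applied to the labelled copies of a graph `H` in all members
of a collection at once.

Deleting an edge of `G` preserves exactly those copies of `F` in `G` that avoid the edge, so each
copy survives `|E(G)| - |E(F)|` of the deletions. Hence the edge deck of a collection of `m`-edge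
graphs determines the total number of copies of every `F` with fewer than `m` edges. Now let `H`
have `m` edges. The alternating sum over all spanning subgraphs `F ≤ H` of the number of copies of
`F` in `G` counts the injections placing `H` edge-disjointly from `G`, and when `2m > C(n,2)` there
are none. Every term except `F = H` is already known, so the term `F = H` is known too. Since a copy
of `H` in another `m`-edge graph on the same number of vertices is an isomorphism, the total number
of copies of `H` is a fixed positive multiple of the multiplicity of the class of `H`.
-/

open Finset

noncomputable section
open scoped Classical

section Placements

open SimpleGraph

variable {V W : Type*}

lemma disjoint_map_iff_disjoint_comap {f : V ↪ W} {H : SimpleGraph V} {G : SimpleGraph W} :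
    Disjoint (H.map f) G ↔ Disjoint H (G.comap f) := by
  simp only [SimpleGraph.disjoint_left, map_adj, comap_adj]
  aesop

-- `SimpleGraph.card_edgeFinset_map` fixes the `Fintype` instances on the two edge sets.
lemma card_edgeFinset_map_embedding (f : V ↪ W) (H : SimpleGraph V) [Fintype H.edgeSet]
    [Fintype (H.map f).edgeSet] : #(H.map f).edgeFinset = #H.edgeFinset := by
  rw [← card_map f.sym2Map]
  congr 1
  rw [← coe_inj]
  push_cast
  exact H.edgeSet_map f

lemma edgeSet_fromEdgeSet_of_subset {K : SimpleGraph V} {s : Set (Sym2 V)}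
    (hs : s ⊆ K.edgeSet) : (fromEdgeSet s).edgeSet = s := by
  rw [edgeSet_fromEdgeSet, sdiff_eq_left]
  exact Set.subset_compl_iff_disjoint_right.1 (hs.trans K.edgeSet_subset_compl_diagSet)

lemma le_deleteEdges_singleton_iff {G K : SimpleGraph W} [Fintype K.edgeSet] {e : Sym2 W} :
    K ≤ G.deleteEdges {e} ↔ K ≤ G ∧ e ∉ K.edgeFinset := by
  rw [deleteEdges, le_sdiff, disjoint_fromEdgeSet, Set.disjoint_singleton_right, mem_edgeFinset]

end Placements

section LabelledCopies

open SimpleGraph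

variable {V W : Type*} [Fintype V] [Fintype W]

lemma labelledCopyCount_eq_card_filter (G : SimpleGraph W) (H : SimpleGraph V) :
    G.labelledCopyCount H = #{f : V ↪ W | H.map f ≤ G} := by
  rw [labelledCopyCount, ← Fintype.card_subtype]
  exact Fintype.card_congr
    { toFun := fun φ => ⟨φ.toEmbedding, (map_le_iff_le_comap _ _ _).2 φ.toHom.le_comap⟩
      invFun := fun f => ⟨⟨f.1, ((map_le_iff_le_comap _ _ _).1 f.2 ·)⟩, f.1.injective⟩
      left_inv := fun _ => rfl
      right_inv := fun _ => rfl }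

lemma labelledCopyCount_congr_right {W' : Type*} [Fintype W'] {G : SimpleGraph W}
    {G' : SimpleGraph W'} (e : G ≃g G') (H : SimpleGraph V) :
    G.labelledCopyCount H = G'.labelledCopyCount H := by
  refine Fintype.card_congr
    { toFun := e.toCopy.comp
      invFun := e.symm.toCopy.comp
      left_inv := fun φ => ?_
      right_inv := fun φ => ?_ } <;>
  · ext v
    simp

lemma card_filter_le_deleteEdges_singleton (G K : SimpleGraph W) :
    #{e ∈ G.edgeFinset | K ≤ G.deleteEdges {e}} =
      if K ≤ G then #G.edgeFinset - #K.edgeFinset else 0 := by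
  simp only [le_deleteEdges_singleton_iff]
  split_ifs with hK
  · simp only [hK, true_and]
    rw [filter_notMem_eq_sdiff, card_sdiff_of_subset (edgeFinset_mono hK)]
  · simp [hK]

-- If `H` has more edges than `G`, the truncated difference and the copy count are both `0`.
lemma sum_labelledCopyCount_deleteEdges_singleton (G : SimpleGraph W) (H : SimpleGraph V) :
    ∑ e ∈ G.edgeFinset, (G.deleteEdges {e}).labelledCopyCount H =
      (#G.edgeFinset - #H.edgeFinset) * G.labelledCopyCount H := by
  simp only [labelledCopyCount_eq_card_filter]
  calc ∑ e ∈ G.edgeFinset, #{f : V ↪ W | H.map f ≤ G.deleteEdges {e}}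
      = ∑ f : V ↪ W, #{e ∈ G.edgeFinset | H.map f ≤ G.deleteEdges {e}} :=
        sum_card_bipartiteAbove_eq_sum_card_bipartiteBelow _
    _ = ∑ f : V ↪ W, if H.map f ≤ G then #G.edgeFinset - #H.edgeFinset else 0 := by
        simp only [card_filter_le_deleteEdges_singleton, card_edgeFinset_map_embedding]
    _ = (#G.edgeFinset - #H.edgeFinset) * #{f : V ↪ W | H.map f ≤ G} := by
        rw [← sum_filter, sum_const, smul_eq_mul, mul_comm]

lemma sum_le_neg_one_pow_card_edgeFinset (K : SimpleGraph V) :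
    ∑ F with F ≤ K, (-1 : ℤ) ^ #F.edgeFinset = if K = ⊥ then 1 else 0 := by
  calc ∑ F with F ≤ K, (-1 : ℤ) ^ #F.edgeFinset
      = ∑ T ∈ K.edgeFinset.powerset, (-1) ^ #T := by
        have subset_edgeSet {T : Finset (Sym2 V)} (hT : T ∈ K.edgeFinset.powerset) :
            (T : Set (Sym2 V)) ⊆ K.edgeSet := by
          rwa [← coe_edgeFinset, coe_subset, ← mem_powerset]
        refine sum_nbij' (fun F => F.edgeFinset) (fun T => fromEdgeSet (T : Set (Sym2 V)))
          (by simp) (fun T hT => ?_) (by simp) (fun T hT => ?_) fun _ _ => rfl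
        · rw [mem_filter_univ, fromEdgeSet_le]
          exact Set.sdiff_subset.trans (subset_edgeSet hT)
        · rw [← coe_inj, coe_edgeFinset, edgeSet_fromEdgeSet_of_subset (subset_edgeSet hT)]
    _ = if K = ⊥ then 1 else 0 := by
        simp only [sum_powerset_neg_one_pow_card, edgeFinset_eq_empty]

lemma alternating_sum_labelledCopyCount (G : SimpleGraph W) (H : SimpleGraph V) :
    ∑ F with F ≤ H, (-1 : ℤ) ^ #F.edgeFinset * G.labelledCopyCount F =
      #{f : V ↪ W | Disjoint (H.map f) G} := by
  have alternating_sum_placement (f : V ↪ W) :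
      ∑ F with F ≤ H, (-1 : ℤ) ^ #F.edgeFinset * (if F.map f ≤ G then 1 else 0) =
        if Disjoint (H.map f) G then 1 else 0 := by
    simp only [mul_ite, mul_one, mul_zero, ← sum_filter, filter_filter, map_le_iff_le_comap,
      ← le_inf_iff, sum_le_neg_one_pow_card_edgeFinset, ← disjoint_iff,
      disjoint_map_iff_disjoint_comap]
  simp only [labelledCopyCount_eq_card_filter, natCast_card_filter, mul_sum]
  rw [sum_comm]
  exact sum_congr rfl fun f _ => alternating_sum_placement f

lemma card_edgeFinset_add_le_choose_two_of_disjoint {G K : SimpleGraph W} (h : Disjoint K G) :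
    #K.edgeFinset + #G.edgeFinset ≤ (Fintype.card W).choose 2 := by
  rw [← card_union_of_disjoint (disjoint_edgeFinset.2 h), ← edgeFinset_sup]
  exact card_edgeFinset_le_card_choose_two

lemma alternating_sum_labelledCopyCount_eq_zero {G : SimpleGraph W} {H : SimpleGraph V}
    (h : (Fintype.card W).choose 2 < #H.edgeFinset + #G.edgeFinset) :
    ∑ F with F ≤ H, (-1 : ℤ) ^ #F.edgeFinset * G.labelledCopyCount F = 0 := by
  rw [alternating_sum_labelledCopyCount, Nat.cast_eq_zero, card_eq_zero, filter_eq_empty_iff]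
  intro f _ hf
  have hcard := card_edgeFinset_add_le_choose_two_of_disjoint hf
  rw [card_edgeFinset_map_embedding] at hcard
  exact h.not_ge hcard

lemma nonempty_iso_of_isContained {G : SimpleGraph W} {H : SimpleGraph V} (h : H ⊑ G)
    (hVW : Fintype.card W ≤ Fintype.card V) (hcard : #G.edgeFinset ≤ #H.edgeFinset) :
    Nonempty (H ≃g G) := by
  obtain ⟨f, hf⟩ := isContained_iff_exists_le_comap.1 h
  have map_eq : H.map f = G := by
    rw [← edgeFinset_inj]
    refine eq_of_subset_of_card_le (edgeFinset_mono ((map_le_iff_le_comap _ _ _).2 hf)) ?_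
    rwa [card_edgeFinset_map_embedding]
  let σ : V ≃ W := .ofBijective f (f.injective.bijective_of_nat_card_le (by simpa using hVW))
  exact ⟨map_eq ▸ Iso.map σ H⟩

end LabelledCopies

section Collections

open SimpleGraph

variable {V W : Type*} [Fintype V] [Fintype W]

/-- The number of labelled copies of `H` in a collection `P` of graphs, each member of `P` counted
with its multiplicity. -/
def totalCopyCount (P : Multiset (SimpleGraph W)) (H : SimpleGraph V) : ℕ :=
  (P.map fun G => G.labelledCopyCount H).sum

lemma alternating_sum_totalCopyCount_eq_zero {P : Multiset (SimpleGraph W)} {H : SimpleGraph V}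
    (hP : ∀ G ∈ P, (Fintype.card W).choose 2 < #H.edgeFinset + #G.edgeFinset) :
    ∑ F with F ≤ H, (-1 : ℤ) ^ #F.edgeFinset * totalCopyCount P F = 0 := by
  calc ∑ F with F ≤ H, (-1 : ℤ) ^ #F.edgeFinset * totalCopyCount P F
      = (P.map fun G =>
          ∑ F with F ≤ H, (-1 : ℤ) ^ #F.edgeFinset * G.labelledCopyCount F).sum := by
        simp [totalCopyCount, Multiset.sum_map_sum, Multiset.sum_map_mul_left]
    _ = (P.map fun _ => 0).sum := by
        rw [Multiset.map_congr rfl fun G hG => alternating_sum_labelledCopyCount_eq_zero (hP G hG)]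
    _ = 0 := Multiset.sum_map_zero

lemma totalCopyCount_eq_of_forall_lt {P Q : Multiset (SimpleGraph W)} {H : SimpleGraph V}
    (hP : ∀ G ∈ P, (Fintype.card W).choose 2 < #H.edgeFinset + #G.edgeFinset)
    (hQ : ∀ G ∈ Q, (Fintype.card W).choose 2 < #H.edgeFinset + #G.edgeFinset)
    (h : ∀ F < H, totalCopyCount P F = totalCopyCount Q F) :
    totalCopyCount P H = totalCopyCount Q H := by
  have difference : ∑ F with F ≤ H,
      (-1 : ℤ) ^ #F.edgeFinset * ((totalCopyCount P F : ℤ) - totalCopyCount Q F) = 0 := by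
    simp only [mul_sub, sum_sub_distrib, alternating_sum_totalCopyCount_eq_zero hP,
      alternating_sum_totalCopyCount_eq_zero hQ, sub_zero]
  rw [sum_eq_single_of_mem H (by simp) fun F hF hFH => ?_] at difference
  · simpa [sub_eq_zero] using difference
  · rw [h F (lt_of_le_of_ne (by simpa using hF) hFH), sub_self, mul_zero]

end Collections

section FinGraphs

variable {n : ℕ} {V : Type*} [Fintype V]

/-- The number of labelled copies of `H` in an isomorphism class of graphs, through which
`totalCopyCount` factors. -/
def classCopyCount (H : SimpleGraph V) : Quotient (isoSetoid n) → ℕ :=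
  Quotient.lift (fun G => G.labelledCopyCount H)
    fun _ _ ⟨e⟩ => labelledCopyCount_congr_right e H

lemma totalCopyCount_eq_sum_classCopyCount (P : Multiset (SimpleGraph (Fin n)))
    (H : SimpleGraph V) :
    totalCopyCount P H = ((P.map isoClass).map (classCopyCount H)).sum := by
  rw [Multiset.map_map]
  rfl

lemma ED_one (G : SimpleGraph (Fin n)) :
    ED 1 G = G.edgeFinset.val.map fun e => G.deleteEdges {e} := by
  simp [ED, powersetCard_one]

lemma totalCopyCount_ED_one (G : SimpleGraph (Fin n)) (H : SimpleGraph V) :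
    totalCopyCount (ED 1 G) H = (#G.edgeFinset - #H.edgeFinset) * G.labelledCopyCount H := by
  rw [totalCopyCount, ED_one, Multiset.map_map]
  exact sum_labelledCopyCount_deleteEdges_singleton G H

lemma totalCopyCount_bind_ED_one {m : ℕ} {P : Multiset (SimpleGraph (Fin n))}
    (hP : ∀ G ∈ P, #G.edgeFinset = m) (H : SimpleGraph V) :
    totalCopyCount (P.bind (ED 1)) H = (m - #H.edgeFinset) * totalCopyCount P H := by
  rw [totalCopyCount, totalCopyCount, Multiset.map_bind, Multiset.sum_bind,
    ← Multiset.sum_map_mul_left]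
  refine congrArg _ (Multiset.map_congr rfl fun G hG => ?_)
  rw [← hP G hG]
  exact totalCopyCount_ED_one G H

lemma totalCopyCount_eq_of_bind_ED_one {m : ℕ} {P Q : Multiset (SimpleGraph (Fin n))}
    (hP : ∀ G ∈ P, #G.edgeFinset = m) (hQ : ∀ G ∈ Q, #G.edgeFinset = m)
    (h : (P.bind (ED 1)).map isoClass = (Q.bind (ED 1)).map isoClass)
    {F : SimpleGraph V} (hF : #F.edgeFinset < m) :
    totalCopyCount P F = totalCopyCount Q F := by
  have hdeck : totalCopyCount (P.bind (ED 1)) F = totalCopyCount (Q.bind (ED 1)) F := by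
    rw [totalCopyCount_eq_sum_classCopyCount, h, ← totalCopyCount_eq_sum_classCopyCount]
  rw [totalCopyCount_bind_ED_one hP, totalCopyCount_bind_ED_one hQ] at hdeck
  exact Nat.eq_of_mul_eq_mul_left (Nat.sub_pos_of_lt hF) hdeck

lemma labelledCopyCount_eq_zero_of_isoClass_ne {G H : SimpleGraph (Fin n)}
    (hcard : #G.edgeFinset = #H.edgeFinset) (hne : isoClass G ≠ isoClass H) :
    G.labelledCopyCount H = 0 :=
  SimpleGraph.labelledCopyCount_eq_zero.2 fun h =>
    hne (Quotient.sound (nonempty_iso_of_isContained h le_rfl hcard.le)).symm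

lemma totalCopyCount_eq_count_isoClass_mul {P : Multiset (SimpleGraph (Fin n))}
    {H : SimpleGraph (Fin n)} (hP : ∀ G ∈ P, #G.edgeFinset = #H.edgeFinset) :
    totalCopyCount P H = (P.map isoClass).count (isoClass H) * H.labelledCopyCount H := by
  rw [totalCopyCount_eq_sum_classCopyCount,
    Multiset.sum_map_eq_nsmul_single (isoClass H) fun c hc hcP => ?_, smul_eq_mul]
  · rfl
  · obtain ⟨G, hG, rfl⟩ := Multiset.mem_map.1 hcP
    exact labelledCopyCount_eq_zero_of_isoClass_ne (hP G hG) hc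

lemma count_isoClass_eq_of_totalCopyCount_eq {P Q : Multiset (SimpleGraph (Fin n))}
    {H : SimpleGraph (Fin n)}
    (hP : ∀ G ∈ P, #G.edgeFinset = #H.edgeFinset) (hQ : ∀ G ∈ Q, #G.edgeFinset = #H.edgeFinset)
    (h : totalCopyCount P H = totalCopyCount Q H) :
    (P.map isoClass).count (isoClass H) = (Q.map isoClass).count (isoClass H) := by
  rw [totalCopyCount_eq_count_isoClass_mul hP, totalCopyCount_eq_count_isoClass_mul hQ] at h
  exact Nat.eq_of_mul_eq_mul_right (SimpleGraph.labelledCopyCount_pos.2 .rfl) h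

lemma count_isoClass_eq_zero {m : ℕ} {P : Multiset (SimpleGraph (Fin n))}
    (hP : ∀ G ∈ P, #G.edgeFinset = m) {H : SimpleGraph (Fin n)} (hH : #H.edgeFinset ≠ m) :
    (P.map isoClass).count (isoClass H) = 0 := by
  refine Multiset.count_eq_zero.2 fun hmem => hH ?_
  obtain ⟨G, hG, hGH⟩ := Multiset.mem_map.1 hmem
  obtain ⟨e⟩ := Quotient.exact hGH
  rw [← e.card_edgeFinset_eq, hP G hG]

end FinGraphs

/-- Lovász's result for collections, edge-deck form: if `2m > C(n,2)` and the
`1`-edge decks of two collections of `m`-edge graphs agree up to isomorphism,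
then the collections are equal up to isomorphism. -/
theorem lovasz_collections_edge_deck (n m : ℕ) (hm : 2 * m > n.choose 2)
    (P Q : Multiset (SimpleGraph (Fin n)))
    (hP : ∀ G ∈ P, G.edgeFinset.card = m) (hQ : ∀ G ∈ Q, G.edgeFinset.card = m)
    (h : (P.bind (ED 1)).map isoClass = (Q.bind (ED 1)).map isoClass) :
    P.map isoClass = Q.map isoClass := by
  refine Multiset.ext.2 (Quotient.ind fun H => ?_)
  change (P.map isoClass).count (isoClass H) = (Q.map isoClass).count (isoClass H)
  by_cases hH : #H.edgeFinset = m
  · subst hH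
    have exceeds_choose_two {R : Multiset (SimpleGraph (Fin n))}
        (hR : ∀ G ∈ R, #G.edgeFinset = #H.edgeFinset) :
        ∀ G ∈ R, (Fintype.card (Fin n)).choose 2 < #H.edgeFinset + #G.edgeFinset := fun G hG => by
      rw [hR G hG, Fintype.card_fin]
      omega
    have eq_of_lt : ∀ F < H, totalCopyCount P F = totalCopyCount Q F := fun F hF =>
      totalCopyCount_eq_of_bind_ED_one hP hQ h
        (card_lt_card (SimpleGraph.edgeFinset_strict_mono hF))
    exact count_isoClass_eq_of_totalCopyCount_eq hP hQ
      (totalCopyCount_eq_of_forall_lt (exceeds_choose_two hP) (exceeds_choose_two hQ) eq_of_lt)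
  · rw [count_isoClass_eq_zero hP hH, count_isoClass_eq_zero hQ hH]

end
end

section
/- Let P and Q be multisets of simple graphs on Fin n in which every member has exactly m edges. If the modified 1-decks of P and Q agree up to isomorphism, then the 1-edge decks of P and Q agree up to isomorphism (i.e. the multiset unions of ED_1 over the members of P and of Q have equal images under the quotient map to isomorphism classes). No restriction on m beyond 0 ≤ m ≤ C(n,2) is needed. -/
/-!
For multisets `A` and `B`, let `⟨A, B⟩` be the number of pairs of equal elements, one from each. It
is the standard inner product of the multiplicity vectors, so `A = B` as soon as
`⟨A, A⟩ = ⟨A, B⟩ = ⟨B, B⟩`.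

Deleting `i` edges is adjoint to adding `i` edges for this pairing, and the modified `i`-deck is the
composite: first delete, then add. Let `A` and `B` be the `i`-edge decks of collections `P` and `Q`
of labelled graphs. If adding `i` edges to `A` and to `B` gives the same multiset, then by
adjointness `⟨A, A⟩` and `⟨A, B⟩` are equal, as both pair `P` with this multiset; likewise
`⟨B, A⟩ = ⟨B, B⟩`. Hence `A = B`.

Isomorphism classes reduce to labelled graphs by replacing every graph by its `n!` relabellings:
this commutes with taking decks, and a multiset of graphs is determined up to isomorphism by the
multiset of all relabellings of its members.
-/

open Finset

noncomputable section
open scoped Classical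

section CountPairing

variable {α β : Type*}

/-- The number of pairs of equal elements, one taken from each multiset: the standard inner product
of the multiplicity functions. -/
def countPairing (A B : Multiset α) : ℕ :=
  (A.map fun a => B.count a).sum

lemma countPairing_eq_sum {A : Multiset α} {s : Finset α} (hs : A.toFinset ⊆ s) (B : Multiset α) :
    countPairing A B = ∑ a ∈ s, A.count a * B.count a := by
  rw [countPairing, Finset.sum_multiset_map_count]
  simp only [smul_eq_mul]
  refine Finset.sum_subset hs fun a _ ha => ?_
  rw [Multiset.count_eq_zero_of_notMem (by simpa using ha), zero_mul]

lemma countPairing_comm (A B : Multiset α) : countPairing A B = countPairing B A := by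
  rw [countPairing_eq_sum Finset.subset_union_left, countPairing_eq_sum Finset.subset_union_right]
  exact Finset.sum_congr rfl fun a _ => mul_comm _ _

lemma eq_of_countPairing_eq {A B : Multiset α} (hA : countPairing A A = countPairing A B)
    (hB : countPairing B A = countPairing B B) : A = B := by
  set s := A.toFinset ∪ B.toFinset with hs
  have hAs : A.toFinset ⊆ s := Finset.subset_union_left
  have hBs : B.toFinset ⊆ s := Finset.subset_union_right
  simp only [countPairing_eq_sum hAs, countPairing_eq_sum hBs] at hA hB
  have sum_sq : ∑ a ∈ s, ((A.count a : ℤ) - B.count a) ^ 2 = 0 := by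
    zify at hA hB
    calc ∑ a ∈ s, ((A.count a : ℤ) - B.count a) ^ 2
        = (∑ a ∈ s, (A.count a : ℤ) * A.count a - ∑ a ∈ s, (A.count a : ℤ) * B.count a) -
          (∑ a ∈ s, (B.count a : ℤ) * A.count a - ∑ a ∈ s, (B.count a : ℤ) * B.count a) := by
          simp only [← Finset.sum_sub_distrib]
          exact Finset.sum_congr rfl fun a _ => by ring
      _ = 0 := by rw [hA, hB, sub_self, sub_self, sub_zero]
  rw [Finset.sum_eq_zero_iff_of_nonneg fun a _ => sq_nonneg _] at sum_sq
  ext a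
  by_cases ha : a ∈ s
  · exact_mod_cast sub_eq_zero.1 (pow_eq_zero_iff two_ne_zero |>.1 (sum_sq a ha))
  · simp only [hs, Finset.mem_union, Multiset.mem_toFinset, not_or] at ha
    rw [Multiset.count_eq_zero_of_notMem ha.1, Multiset.count_eq_zero_of_notMem ha.2]

variable {D : α → Multiset β} {U : β → Multiset α}

lemma countPairing_bind (hDU : ∀ a b, (D a).count b = (U b).count a) (P : Multiset α)
    (R : Multiset β) : countPairing (P.bind D) R = countPairing P (R.bind U) := by
  simp only [countPairing, Multiset.map_bind, Multiset.sum_bind, Multiset.count_bind, ← hDU]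
  exact congrArg Multiset.sum (Multiset.map_congr rfl fun a _ => countPairing_comm (D a) R)

lemma bind_eq_bind_of_adjoint (hDU : ∀ a b, (D a).count b = (U b).count a) {P Q : Multiset α}
    (h : (P.bind D).bind U = (Q.bind D).bind U) : P.bind D = Q.bind D :=
  eq_of_countPairing_eq (by simp only [countPairing_bind hDU, h])
    (by simp only [countPairing_bind hDU, h])

end CountPairing

section Deck

variable {n : ℕ}

/-- The multiset of graphs `H + Y` over all `i`-element sets `Y` of non-edges of `H`. It is the
operation adjoint to `ED i`. -/
def addDeck (i : ℕ) (H : SimpleGraph (Fin n)) : Multiset (SimpleGraph (Fin n)) :=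
  (Hᶜ.edgeFinset.powersetCard i).val.map fun Y : Finset (Sym2 (Fin n)) =>
    H ⊔ SimpleGraph.fromEdgeSet (Y : Set (Sym2 (Fin n)))

/- In `ED` the coercion of `X` to a set elaborates to a monadic lift of the whole multiset of
subsets `X`; here it is moved into the mapped function. -/
lemma ED_eq_map (i : ℕ) (G : SimpleGraph (Fin n)) :
    ED i G = (G.edgeFinset.powersetCard i).val.map fun X : Finset (Sym2 (Fin n)) =>
      G.deleteEdges (X : Set (Sym2 (Fin n))) := by
  simp only [ED, Multiset.bind_def, Multiset.pure_def, Multiset.bind_singleton, Multiset.map_map,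
    Function.comp_def]

lemma edgeSet_sdiff_deleteEdges {V : Type*} {G : SimpleGraph V} {X : Set (Sym2 V)}
    (hX : X ⊆ G.edgeSet) : (G \ G.deleteEdges X).edgeSet = X := by
  rw [SimpleGraph.edgeSet_sdiff, SimpleGraph.edgeSet_deleteEdges, Set.sdiff_sdiff_cancel_left hX]

lemma edgeSet_sup_fromEdgeSet_sdiff {V : Type*} {H : SimpleGraph V} {Y : Set (Sym2 V)}
    (hY : Y ⊆ Hᶜ.edgeSet) : ((H ⊔ SimpleGraph.fromEdgeSet Y) \ H).edgeSet = Y := by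
  have hdiag : Disjoint Y Sym2.diagSet := Set.disjoint_left.2 fun e he =>
    Hᶜ.not_isDiag_of_mem_edgeSet (hY he)
  have hdisj : Disjoint Y H.edgeSet :=
    (SimpleGraph.disjoint_edgeSet.2 disjoint_compl_left).mono_left hY
  rw [sup_sdiff_left_self, SimpleGraph.edgeSet_sdiff, SimpleGraph.edgeSet_fromEdgeSet,
    sdiff_eq_left.2 hdiag, sdiff_eq_left.2 hdisj]

lemma nodup_ED (i : ℕ) (G : SimpleGraph (Fin n)) : (ED i G).Nodup := by
  rw [ED_eq_map]
  refine Multiset.Nodup.map_on (fun X hX X' hX' h => ?_) (Finset.nodup _)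
  rw [Finset.mem_val, Finset.mem_powersetCard, ← Finset.coe_subset, SimpleGraph.coe_edgeFinset]
    at hX hX'
  rw [← Finset.coe_inj, ← edgeSet_sdiff_deleteEdges hX.1, h, edgeSet_sdiff_deleteEdges hX'.1]

lemma nodup_addDeck (i : ℕ) (H : SimpleGraph (Fin n)) : (addDeck i H).Nodup := by
  refine Multiset.Nodup.map_on (fun Y hY Y' hY' h => ?_) (Finset.nodup _)
  rw [Finset.mem_val, Finset.mem_powersetCard, ← Finset.coe_subset, SimpleGraph.coe_edgeFinset]
    at hY hY'
  rw [← Finset.coe_inj, ← edgeSet_sup_fromEdgeSet_sdiff hY.1, h,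
    edgeSet_sup_fromEdgeSet_sdiff hY'.1]

lemma mem_ED_iff {i : ℕ} {G H : SimpleGraph (Fin n)} :
    H ∈ ED i G ↔ H ≤ G ∧ (G \ H).edgeSet.ncard = i := by
  simp only [ED_eq_map, Multiset.mem_map, Finset.mem_val, Finset.mem_powersetCard,
    ← Finset.coe_subset, SimpleGraph.coe_edgeFinset]
  constructor
  · rintro ⟨X, ⟨hX, rfl⟩, rfl⟩
    exact ⟨G.deleteEdges_le _, by rw [edgeSet_sdiff_deleteEdges hX, Set.ncard_coe_finset]⟩
  · rintro ⟨hle, rfl⟩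
    refine ⟨(G \ H).edgeFinset, ⟨?_, ?_⟩, ?_⟩
    · simpa only [SimpleGraph.coe_edgeFinset] using SimpleGraph.edgeSet_mono sdiff_le
    · rw [← Set.ncard_coe_finset, SimpleGraph.coe_edgeFinset]
    · rw [SimpleGraph.coe_edgeFinset, SimpleGraph.deleteEdges_edgeSet, sdiff_sdiff_eq_self hle]

lemma mem_addDeck_iff {i : ℕ} {G H : SimpleGraph (Fin n)} :
    G ∈ addDeck i H ↔ H ≤ G ∧ (G \ H).edgeSet.ncard = i := by
  simp only [addDeck, Multiset.mem_map, Finset.mem_val, Finset.mem_powersetCard,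
    ← Finset.coe_subset, SimpleGraph.coe_edgeFinset]
  constructor
  · rintro ⟨Y, ⟨hY, rfl⟩, rfl⟩
    exact ⟨le_sup_left, by rw [edgeSet_sup_fromEdgeSet_sdiff hY, Set.ncard_coe_finset]⟩
  · rintro ⟨hle, rfl⟩
    refine ⟨(G \ H).edgeFinset, ⟨?_, ?_⟩, ?_⟩
    · rw [SimpleGraph.coe_edgeFinset, sdiff_eq]
      exact SimpleGraph.edgeSet_mono inf_le_right
    · rw [← Set.ncard_coe_finset, SimpleGraph.coe_edgeFinset]
    · rw [SimpleGraph.coe_edgeFinset, SimpleGraph.fromEdgeSet_edgeSet, sup_sdiff_cancel_right hle]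

lemma count_ED_eq_count_addDeck (i : ℕ) (G H : SimpleGraph (Fin n)) :
    (ED i G).count H = (addDeck i H).count G := by
  rw [Multiset.count_eq_of_nodup (nodup_ED i G), Multiset.count_eq_of_nodup (nodup_addDeck i H)]
  simp only [mem_ED_iff, mem_addDeck_iff]

lemma MD_eq_bind (i : ℕ) (G : SimpleGraph (Fin n)) : MD i G = (ED i G).bind (addDeck i) := by
  rw [ED_eq_map, Multiset.bind_map, MD]
  -- `congr!` identifies two `Fintype` instances on the set of non-edges of `G - X`.
  refine Multiset.bind_congr fun X _ => Multiset.map_congr (by congr!) fun Y _ => ?_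
  rw [Finset.coe_union, Finset.coe_sdiff, SimpleGraph.coe_edgeFinset, SimpleGraph.fromEdgeSet_union,
    ← SimpleGraph.edgeSet_deleteEdges, SimpleGraph.fromEdgeSet_edgeSet]

lemma bind_MD (i : ℕ) (P : Multiset (SimpleGraph (Fin n))) :
    P.bind (MD i) = (P.bind (ED i)).bind (addDeck i) := by
  simp only [Multiset.bind_assoc, ← MD_eq_bind]

theorem bind_ED_eq_of_bind_MD_eq {i : ℕ} {P Q : Multiset (SimpleGraph (Fin n))}
    (h : P.bind (MD i) = Q.bind (MD i)) : P.bind (ED i) = Q.bind (ED i) :=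
  bind_eq_bind_of_adjoint (count_ED_eq_count_addDeck i) (by rwa [← bind_MD, ← bind_MD])

end Deck

section Relabelling

variable {n : ℕ}

lemma simpleGraph_apply_eq_of_iso {V W : Type*} {G : SimpleGraph V} {H : SimpleGraph W}
    (e : G ≃g H) : e.toEquiv.simpleGraph G = H := by
  ext a b
  exact e.symm.map_adj_iff

lemma isoClass_simpleGraph (σ : Equiv.Perm (Fin n)) (G : SimpleGraph (Fin n)) :
    isoClass (σ.simpleGraph G) = isoClass G :=
  Quotient.sound ⟨SimpleGraph.Iso.comap σ.symm G⟩

/-- The multiset of the `n!` relabellings of `G`, with repetitions when `G` has automorphisms. -/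
def relabellings (G : SimpleGraph (Fin n)) : Multiset (SimpleGraph (Fin n)) :=
  (univ : Finset (Equiv.Perm (Fin n))).val.map fun σ => σ.simpleGraph G

lemma relabellings_simpleGraph (τ : Equiv.Perm (Fin n)) (G : SimpleGraph (Fin n)) :
    relabellings (τ.simpleGraph G) = relabellings G :=
  calc relabellings (τ.simpleGraph G)
      = (univ.val.map (Equiv.mulRight τ)).map fun σ : Equiv.Perm (Fin n) => σ.simpleGraph G := by
        rw [Multiset.map_map]
        rfl
    _ = relabellings G := by rw [Multiset.map_univ_val_equiv, relabellings]

lemma relabellings_eq_of_iso {G H : SimpleGraph (Fin n)} (e : G ≃g H) :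
    relabellings G = relabellings H := by
  rw [← simpleGraph_apply_eq_of_iso e, relabellings_simpleGraph]

lemma map_isoClass_relabellings (G : SimpleGraph (Fin n)) :
    (relabellings G).map isoClass = n.factorial • {isoClass G} := by
  simp only [relabellings, Multiset.map_map, Function.comp_def, isoClass_simpleGraph,
    Multiset.map_const', Finset.card_val, Finset.card_univ, Fintype.card_perm, Fintype.card_fin,
    Multiset.nsmul_singleton]

lemma map_isoClass_bind_relabellings (P : Multiset (SimpleGraph (Fin n))) :
    (P.bind relabellings).map isoClass = n.factorial • P.map isoClass := by
  simp only [Multiset.map_bind, map_isoClass_relabellings, ← Multiset.bind_singleton P isoClass]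
  exact Multiset.sum_map_nsmul

lemma bind_relabellings_eq_iff {P Q : Multiset (SimpleGraph (Fin n))} :
    P.bind relabellings = Q.bind relabellings ↔ P.map isoClass = Q.map isoClass := by
  constructor <;> intro h
  · apply nsmul_right_injective n.factorial_ne_zero
    simp only [← map_isoClass_bind_relabellings, h]
  · let lifted : Quotient (isoSetoid n) → Multiset (SimpleGraph (Fin n)) :=
      Quotient.lift relabellings fun _ _ ⟨e⟩ => relabellings_eq_of_iso e
    have bind_lifted (R : Multiset (SimpleGraph (Fin n))) :
        R.bind relabellings = (R.map isoClass).bind lifted :=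
      (Multiset.bind_map R lifted isoClass).symm
    rw [bind_lifted, bind_lifted, h]

lemma bind_bind_relabellings_comm {D : SimpleGraph (Fin n) → Multiset (SimpleGraph (Fin n))}
    (hD : ∀ (σ : Equiv.Perm (Fin n)) G, D (σ.simpleGraph G) = (D G).map σ.simpleGraph)
    (P : Multiset (SimpleGraph (Fin n))) :
    (P.bind D).bind relabellings = (P.bind relabellings).bind D := by
  simp only [Multiset.bind_assoc, relabellings, Multiset.bind_map, hD]
  exact Multiset.bind_congr fun G _ => Multiset.bind_map_comm _ _

lemma simpleGraph_le_simpleGraph_iff {V W : Type*} (e : V ≃ W) {G H : SimpleGraph V} :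
    e.simpleGraph H ≤ e.simpleGraph G ↔ H ≤ G := by
  refine ⟨fun h => ?_, fun h => ?_⟩
  · simpa using SimpleGraph.comap_monotone e.toEmbedding h
  · exact SimpleGraph.comap_monotone e.symm.toEmbedding h

lemma ncard_edgeSet_sdiff_simpleGraph {V W : Type*} (e : V ≃ W) (G H : SimpleGraph V) :
    (e.simpleGraph G \ e.simpleGraph H).edgeSet.ncard = (G \ H).edgeSet.ncard :=
  Nat.card_congr (SimpleGraph.Iso.comap e.symm (G \ H)).mapEdgeSet

lemma ED_simpleGraph (i : ℕ) (σ : Equiv.Perm (Fin n)) (G : SimpleGraph (Fin n)) :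
    ED i (σ.simpleGraph G) = (ED i G).map σ.simpleGraph := by
  refine ((nodup_ED i _).ext ((nodup_ED i G).map σ.simpleGraph.injective)).2 fun K => ?_
  obtain ⟨H, rfl⟩ := σ.simpleGraph.surjective K
  rw [Multiset.mem_map_of_injective σ.simpleGraph.injective, mem_ED_iff, mem_ED_iff,
    simpleGraph_le_simpleGraph_iff, ncard_edgeSet_sdiff_simpleGraph]

lemma addDeck_simpleGraph (i : ℕ) (σ : Equiv.Perm (Fin n)) (H : SimpleGraph (Fin n)) :
    addDeck i (σ.simpleGraph H) = (addDeck i H).map σ.simpleGraph := by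
  refine ((nodup_addDeck i _).ext ((nodup_addDeck i H).map σ.simpleGraph.injective)).2 fun K => ?_
  obtain ⟨G, rfl⟩ := σ.simpleGraph.surjective K
  rw [Multiset.mem_map_of_injective σ.simpleGraph.injective, mem_addDeck_iff, mem_addDeck_iff,
    simpleGraph_le_simpleGraph_iff, ncard_edgeSet_sdiff_simpleGraph]

lemma MD_simpleGraph (i : ℕ) (σ : Equiv.Perm (Fin n)) (G : SimpleGraph (Fin n)) :
    MD i (σ.simpleGraph G) = (MD i G).map σ.simpleGraph := by
  simp only [MD_eq_bind, ED_simpleGraph, Multiset.bind_map, addDeck_simpleGraph, Multiset.map_bind]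

end Relabelling

theorem edge_decks_determined_by_modified_decks_general (n i : ℕ)
    (P Q : Multiset (SimpleGraph (Fin n)))
    (h : (P.bind (MD i)).map isoClass = (Q.bind (MD i)).map isoClass) :
    (P.bind (ED i)).map isoClass = (Q.bind (ED i)).map isoClass := by
  simp only [← bind_relabellings_eq_iff, bind_bind_relabellings_comm (MD_simpleGraph i)] at h
  simp only [← bind_relabellings_eq_iff, bind_bind_relabellings_comm (ED_simpleGraph i)]
  exact bind_ED_eq_of_bind_MD_eq h

/-- If the modified `1`-decks of two collections of `m`-edge graphs agree up to
isomorphism, then their `1`-edge decks also agree up to isomorphism; no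
restriction on `m` is needed. -/
theorem edge_decks_determined_by_modified_decks (n m : ℕ)
    (P Q : Multiset (SimpleGraph (Fin n)))
    (hP : ∀ G ∈ P, G.edgeFinset.card = m) (hQ : ∀ G ∈ Q, G.edgeFinset.card = m)
    (h : (P.bind (MD 1)).map isoClass = (Q.bind (MD 1)).map isoClass) :
    (P.bind (ED 1)).map isoClass = (Q.bind (ED 1)).map isoClass := by
  exact edge_decks_determined_by_modified_decks_general n 1 P Q h

end
end
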